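/- arXiv:1401.0780 — 2 statements merged into one kernel-verified Lean document; each statement's English description precedes it below -/
import Mathlib

section
/- Assume ν_d((−π,π]²) > 0, and let ξ be a random point measure almost surely in 𝒞₂ such that d₄(EM(W_N/N), ξ) → 0 in probability as N → ∞ (such ξ exists). Then the random variable ∫_ℝ x² ξ(dx) = ∑_{j≠0} α_j(ξ)² is strictly positive almost surely, and its distribution is non-degenerate (it is not almost surely equal to a constant). -/
open MeasureTheory ProbabilityTheory Filter Real

noncomputable section

/-- The square `(-π, π]²` on which the spectral measure lives. -/
def specBox : Set (ℝ × ℝ) := Set.Ioc (-π) π ×ˢ Set.Ioc (-π) π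

/-- `(1/N) ∑_j g(λ_j(A))`, the integral of `g` against the empirical spectral
distribution of a symmetric `N × N` real matrix `A` (junk value `0` if `A` is
not symmetric). -/
def esdEval {N : ℕ} (A : Matrix (Fin N) (Fin N) ℝ) (g : ℝ → ℝ) : ℝ :=
  if hA : A.IsHermitian then (N : ℝ)⁻¹ * ∑ j, g (hA.eigenvalues j) else 0

/-- The (random) empirical spectral distributions of `A N` converge weakly in
probability to the probability measure `μ`: for every bounded continuous `g`,
`∫ g d(ESD(A N)) → ∫ g dμ` in probability. -/
def ESDTendstoInProb {Ω : Type*} [MeasurableSpace Ω] (P : Measure Ω)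
    (A : (N : ℕ) → Ω → Matrix (Fin N) (Fin N) ℝ) (μ : Measure ℝ) : Prop :=
  ∀ g : ℝ → ℝ, Continuous g → (∃ C, ∀ x, |g x| ≤ C) →
    ∀ ε > 0, Tendsto (fun N => P {ω | ε ≤ |esdEval (A N ω) g - ∫ x, g x ∂μ|})
      atTop (nhds 0)

/-- The symmetric matrix `W_N/√N`, where `W_N(i,j) = X_{i,j} + X_{j,i}`,
`1 ≤ i,j ≤ N`. -/
def scaledW {Ω : Type*} (X : ℤ → ℤ → Ω → ℝ) (N : ℕ) (ω : Ω) :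
    Matrix (Fin N) (Fin N) ℝ :=
  fun i j => (Real.sqrt N)⁻¹ *
    (X ((i : ℕ) + 1) ((j : ℕ) + 1) ω + X ((j : ℕ) + 1) ((i : ℕ) + 1) ω)

/-- A centered stationary Gaussian process indexed by `ℤ²` with positive
variance: every finite real linear combination is a centered Gaussian random
variable, and second moments are shift invariant. -/
structure StatGauss {Ω : Type*} [MeasurableSpace Ω] (P : Measure Ω)
    (X : ℤ → ℤ → Ω → ℝ) : Prop where
  meas : ∀ j k, Measurable (X j k)
  gauss : ∀ c : (ℤ × ℤ) →₀ ℝ, ∃ v : NNReal,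
    P.map (fun ω => ∑ p ∈ c.support, c p * X p.1 p.2 ω) = gaussianReal 0 v
  var_pos : 0 < ∫ ω, (X 0 0 ω) ^ 2 ∂P
  stat : ∀ j k u v : ℤ,
    ∫ ω, X j k ω * X (j + u) (k + v) ω ∂P = ∫ ω, X 0 0 ω * X u v ω ∂P

/-- The spectral measure `ν` of the process `X` (from the Herglotz
representation), together with the standing assumption of the paper:
`ν = ν_ac + ν_d`, where `ν_ac` is absolutely continuous with respect to
Lebesgue measure with density `f ≥ 0` and `ν_d = νd` is discrete (supported on
a countable set). -/
structure SpectralDecomp {Ω : Type*} [MeasurableSpace Ω] (P : Measure Ω)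
    (X : ℤ → ℤ → Ω → ℝ) (ν νd : Measure (ℝ × ℝ)) (f : ℝ × ℝ → ℝ) : Prop where
  finite : IsFiniteMeasure ν
  support : ν specBoxᶜ = 0
  herglotz : ∀ u v : ℤ,
    (∫ q, Complex.exp (Complex.I * ((u * q.1 + v * q.2 : ℝ) : ℂ)) ∂ν)
      = ((∫ ω, X 0 0 ω * X u v ω ∂P : ℝ) : ℂ)
  f_nonneg : ∀ q, 0 ≤ f q
  f_meas : Measurable f
  discrete : ∃ s : Set (ℝ × ℝ), s.Countable ∧ νd sᶜ = 0
  decomp : ν = (volume.restrict specBox).withDensity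
      (fun q => ENNReal.ofReal (f q)) + νd

/-- A point configuration: the sequences `(α_1(ξ), α_2(ξ), …)` (nonnegative
part) and `(α_{-1}(ξ), α_{-2}(ξ), …)` (nonpositive part) of a point measure
`ξ = ∞·δ_0 + ∑_{j≠0} δ_{α_j(ξ)}` in `𝒫`. -/
abbrev PtCfg : Type := (ℕ → ℝ) × (ℕ → ℝ)

/-- The eigen measure `EM(A) = ∞·δ_0 + ∑_j δ_{λ_j(A)}` of a symmetric matrix
`A`, recorded as a point configuration: the nonnegative parts of the
eigenvalues sorted in decreasing order (padded with `0`s) and the nonpositive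
parts sorted in increasing order (padded with `0`s). -/
def EMcfg {N : ℕ} (A : Matrix (Fin N) (Fin N) ℝ) : PtCfg :=
  if hA : A.IsHermitian then
    (fun n =>
      (List.insertionSort (· ≥ ·)
        ((List.ofFn hA.eigenvalues).map fun t => max t 0)).getD n 0,
     fun n =>
      (List.insertionSort (· ≤ ·)
        ((List.ofFn hA.eigenvalues).map fun t => min t 0)).getD n 0)
  else (fun _ => 0, fun _ => 0)

/-- `ξ ∈ 𝒞_p`: the point measure `ξ` satisfies `∑_{j≠0} |α_j(ξ)|^p < ∞`. -/
def MemC (p : ℕ) (ξ : PtCfg) : Prop :=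
  Summable (fun n => |ξ.1 n| ^ p) ∧ Summable (fun n => |ξ.2 n| ^ p)

/-- The distance `d_p(ξ₁, ξ₂) = (∑_{j≠0} |α_j(ξ₁) - α_j(ξ₂)|^p)^{1/p}` on
`𝒞_p`. -/
def dPt (p : ℕ) (ξ₁ ξ₂ : PtCfg) : ℝ :=
  ((∑' n, |ξ₁.1 n - ξ₂.1 n| ^ p) + ∑' n, |ξ₁.2 n - ξ₂.2 n| ^ p) ^ ((p : ℝ)⁻¹)

/-- The symmetric matrix `W_N/N`, where `W_N(i,j) = X_{i,j} + X_{j,i}`. -/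
def scaledW1 {Ω : Type*} (X : ℤ → ℤ → Ω → ℝ) (N : ℕ) (ω : Ω) :
    Matrix (Fin N) (Fin N) ℝ :=
  fun i j => (N : ℝ)⁻¹ *
    (X ((i : ℕ) + 1) ((j : ℕ) + 1) ω + X ((j : ℕ) + 1) ((i : ℕ) + 1) ω)

/-!
Let `x` be an atom of the spectral measure `ν`. The sum `N⁻¹ ∑ cos(θ + ⟨(j, k), x⟩) A j k` is at
most the operator norm of `A`, because a matrix with entries `cos(φ j + ψ k)` is a difference of two
rank-one matrices. For `A = W_N / N` it is a centred Gaussian variable; the atom contributes to its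
variance at least `ν{x}/4` when the phase `θ` is chosen well, because symmetrising the matrix
`w_j z_k` of a character can only increase its pairing with itself. On the other hand the operator
norm, the largest `|λ_j|`, is at most `√(∫ x² ξ(dx)) + d_p(EM(W_N/N), ξ)`. Letting `N → ∞`,
`√(∫ x² ξ(dx))` stochastically dominates the absolute value of a Gaussian variable of variance
`ν{x}/4`, which has no mass at `0` and is unbounded.
-/

open scoped ENNReal NNReal Topology

section MatrixNorm

open scoped Matrix.Norms.L2Operator

lemma norm_sq_cos_add_norm_sq_sin {n : Type*} [Fintype n] (φ : n → ℝ) :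
    ‖WithLp.toLp 2 fun i => cos (φ i)‖ ^ 2 + ‖WithLp.toLp 2 fun i => sin (φ i)‖ ^ 2 =
      Fintype.card n := by
  simp [EuclideanSpace.norm_sq_eq, ← Finset.sum_add_distrib]

variable {𝕜 n : Type*} [RCLike 𝕜] [Fintype n] [DecidableEq n]

lemma l2_opNorm_eq_norm_eigenvalues {A : Matrix n n 𝕜} (hA : A.IsHermitian) :
    ‖A‖ = ‖hA.eigenvalues‖ := by
  conv_lhs => rw [hA.spectral_theorem, Unitary.conjStarAlgAut_apply, ← Unitary.coe_star,
    CStarRing.norm_mul_coe_unitary, CStarRing.norm_coe_unitary_mul, Matrix.l2_opNorm_diagonal]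
  simp [Pi.norm_def]

lemma norm_star_dotProduct_mulVec_le (A : Matrix n n 𝕜) (u v : n → 𝕜) :
    ‖star u ⬝ᵥ A.mulVec v‖ ≤ ‖A‖ * (‖WithLp.toLp 2 u‖ * ‖WithLp.toLp 2 v‖) := by
  rw [dotProduct_comm]
  calc ‖A.mulVec v ⬝ᵥ star u‖ = ‖inner 𝕜 (WithLp.toLp 2 u) (WithLp.toLp 2 (A.mulVec v))‖ := by
        rw [EuclideanSpace.inner_toLp_toLp]
    _ ≤ ‖WithLp.toLp 2 u‖ * ‖WithLp.toLp 2 (A.mulVec v)‖ := norm_inner_le_norm _ _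
    _ ≤ ‖WithLp.toLp 2 u‖ * (‖A‖ * ‖WithLp.toLp 2 v‖) := by
        gcongr
        exact Matrix.l2_opNorm_mulVec A (WithLp.toLp 2 v)
    _ = ‖A‖ * (‖WithLp.toLp 2 u‖ * ‖WithLp.toLp 2 v‖) := by ring

lemma abs_sum_cos_mul_le (A : Matrix n n ℝ) (φ ψ : n → ℝ) :
    |∑ j, ∑ k, cos (φ j + ψ k) * A j k| ≤ Fintype.card n * ‖A‖ := by
  set cosφ : n → ℝ := fun i => cos (φ i)
  set sinφ : n → ℝ := fun i => sin (φ i)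
  set cosψ : n → ℝ := fun i => cos (ψ i)
  set sinψ : n → ℝ := fun i => sin (ψ i)
  have expand : ∑ j, ∑ k, cos (φ j + ψ k) * A j k =
      star cosφ ⬝ᵥ A.mulVec cosψ - star sinφ ⬝ᵥ A.mulVec sinψ := by
    simp only [dotProduct, Matrix.mulVec, Finset.mul_sum, ← Finset.sum_sub_distrib, star_trivial]
    refine Finset.sum_congr rfl fun j _ => Finset.sum_congr rfl fun k _ => ?_
    rw [cos_add]
    ring
  have hcos := norm_star_dotProduct_mulVec_le A cosφ cosψ
  have hsin := norm_star_dotProduct_mulVec_le A sinφ sinψ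
  have hφ := norm_sq_cos_add_norm_sq_sin φ
  have hψ := norm_sq_cos_add_norm_sq_sin ψ
  have amgm : ‖WithLp.toLp 2 cosφ‖ * ‖WithLp.toLp 2 cosψ‖ +
      ‖WithLp.toLp 2 sinφ‖ * ‖WithLp.toLp 2 sinψ‖ ≤ Fintype.card n := by
    linarith [two_mul_le_add_sq ‖WithLp.toLp 2 cosφ‖ ‖WithLp.toLp 2 cosψ‖,
      two_mul_le_add_sq ‖WithLp.toLp 2 sinφ‖ ‖WithLp.toLp 2 sinψ‖]
  calc |∑ j, ∑ k, cos (φ j + ψ k) * A j k|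
      ≤ ‖star cosφ ⬝ᵥ A.mulVec cosψ‖ + ‖star sinφ ⬝ᵥ A.mulVec sinψ‖ := by
        rw [expand]
        exact norm_sub_le (star cosφ ⬝ᵥ A.mulVec cosψ) _
    _ ≤ (‖WithLp.toLp 2 cosφ‖ * ‖WithLp.toLp 2 cosψ‖ +
          ‖WithLp.toLp 2 sinφ‖ * ‖WithLp.toLp 2 sinψ‖) * ‖A‖ := by linarith
    _ ≤ Fintype.card n * ‖A‖ := by gcongr

end MatrixNorm

section Trigonometric

variable {ι : Type*} [Fintype ι]

lemma sum_conj_mul_add_swap {𝕜 : Type*} [RCLike 𝕜] {w z : ι → 𝕜} (hw : ∀ i, ‖w i‖ = 1)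
    (hz : ∀ i, ‖z i‖ = 1) :
    ∑ i, ∑ j, starRingEnd 𝕜 (w i * z j) * (w i * z j + w j * z i) =
      (Fintype.card ι : 𝕜) ^ 2 + ‖∑ i, starRingEnd 𝕜 (w i) * z i‖ ^ 2 := by
  have summand (i j : ι) : starRingEnd 𝕜 (w i * z j) * (w i * z j + w j * z i) =
      1 + starRingEnd 𝕜 (w i) * z i * starRingEnd 𝕜 (starRingEnd 𝕜 (w j) * z j) := by
    have hij : starRingEnd 𝕜 (w i * z j) * (w i * z j) = 1 := by
      rw [RCLike.conj_mul]
      simp [hw, hz]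
    rw [mul_add, hij]
    simp only [map_mul, RCLike.conj_conj]
    ring
  simp_rw [summand, Finset.sum_add_distrib, ← Finset.sum_mul_sum, ← map_sum, RCLike.mul_conj]
  simp [sq]

lemma card_sq_le_norm_sum_conj_mul_add_swap {𝕜 : Type*} [RCLike 𝕜] {w z : ι → 𝕜}
    (hw : ∀ i, ‖w i‖ = 1) (hz : ∀ i, ‖z i‖ = 1) :
    (Fintype.card ι : ℝ) ^ 2 ≤
      ‖∑ i, ∑ j, starRingEnd 𝕜 (w i * z j) * (w i * z j + w j * z i)‖ := by
  rw [sum_conj_mul_add_swap hw hz]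
  calc (Fintype.card ι : ℝ) ^ 2
      ≤ Fintype.card ι ^ 2 + ‖∑ i, starRingEnd 𝕜 (w i) * z i‖ ^ 2 :=
        le_add_of_nonneg_right (by positivity)
    _ = ‖((Fintype.card ι ^ 2 + ‖∑ i, starRingEnd 𝕜 (w i) * z i‖ ^ 2 : ℝ) : 𝕜)‖ :=
        (RCLike.norm_of_nonneg (by positivity)).symm
    _ = _ := by push_cast; rfl

lemma exists_norm_sum_exp_mul_le_two_mul_norm_sum_cos_mul (α : ι → ℝ) (z : ι → ℂ) :
    ∃ θ : ℝ, ‖∑ i, Complex.exp (-α i * Complex.I) * z i‖ ≤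
      2 * ‖∑ i, (cos (θ + α i) : ℂ) * z i‖ := by
  by_contra! h
  have hcos := h 0
  have hsin := h (-(π / 2))
  have sin_eq (i : ι) : cos (-(π / 2) + α i) = sin (α i) := by
    rw [neg_add_eq_sub, cos_sub_pi_div_two]
  have exp_eq : ∑ i, Complex.exp (-α i * Complex.I) * z i =
      ∑ i, (cos (0 + α i) : ℂ) * z i - Complex.I * ∑ i, (cos (-(π / 2) + α i) : ℂ) * z i := by
    rw [Finset.mul_sum, ← Finset.sum_sub_distrib]
    refine Finset.sum_congr rfl fun i _ => ?_
    rw [zero_add, sin_eq, Complex.exp_mul_I, Complex.cos_neg, Complex.sin_neg]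
    push_cast
    ring
  have triangle := norm_sub_le (∑ i, (cos (0 + α i) : ℂ) * z i)
    (Complex.I * ∑ i, (cos (-(π / 2) + α i) : ℂ) * z i)
  rw [← exp_eq, norm_mul, Complex.norm_I, one_mul] at triangle
  linarith

end Trigonometric

section Gaussian

lemma variance_eq_integral_sq_of_hasLaw_gaussianReal {Ω : Type*} [MeasurableSpace Ω]
    {P : Measure Ω} {Y : Ω → ℝ} {v : ℝ≥0} (hY : HasLaw Y (gaussianReal 0 v) P) :
    (v : ℝ) = ∫ ω, Y ω ^ 2 ∂P := by
  rw [← variance_id_gaussianReal (μ := 0) (v := v), ← hY.variance_eq,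
    variance_of_integral_eq_zero hY.aemeasurable (by simp [hY.integral_eq])]

lemma gaussianReal_eq_map_sqrt_mul (v : ℝ≥0) :
    gaussianReal 0 v = (gaussianReal 0 1).map (√(v : ℝ) * ·) := by
  rw [gaussianReal_map_const_mul, mul_zero, mul_one]
  congr
  ext
  simp

lemma antitone_gaussianReal_closedBall (t : ℝ) :
    Antitone fun v : ℝ≥0 => gaussianReal 0 v (Metric.closedBall 0 t) := by
  intro s v hsv
  simp only [gaussianReal_eq_map_sqrt_mul s, gaussianReal_eq_map_sqrt_mul v]
  rw [Measure.map_apply (by fun_prop) measurableSet_closedBall,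
    Measure.map_apply (by fun_prop) measurableSet_closedBall]
  refine measure_mono fun z hz => ?_
  simp only [Set.mem_preimage, mem_closedBall_zero_iff, norm_mul] at hz ⊢
  refine le_trans ?_ hz
  rw [Real.norm_of_nonneg (Real.sqrt_nonneg _), Real.norm_of_nonneg (Real.sqrt_nonneg _)]
  gcongr

lemma gaussianReal_closedBall_lt_one (μ : ℝ) {v : ℝ≥0} (hv : v ≠ 0) (x t : ℝ) :
    gaussianReal μ v (Metric.closedBall x t) < 1 := by
  have : (gaussianReal μ v).IsOpenPosMeasure :=
    (gaussianReal_absolutelyContinuous' μ hv).isOpenPosMeasure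
  have hcompl : (Metric.closedBall x t)ᶜ.Nonempty :=
    Set.nonempty_compl.2 (isCompact_closedBall x t).ne_univ
  refine prob_le_one.lt_of_ne fun h => ?_
  rw [← prob_compl_eq_zero_iff measurableSet_closedBall] at h
  exact (Metric.isClosed_closedBall.isOpen_compl.measure_pos _ hcompl).ne' h

lemma tendsto_measure_closedBall_add {E : Type*} [NormedAddCommGroup E] [NormedSpace ℝ E]
    [MeasurableSpace E] [OpensMeasurableSpace E] (μ : Measure E) [IsFiniteMeasure μ] (x : E)
    {t : ℝ} (ht : 0 ≤ t) :
    Tendsto (fun ε => μ (Metric.closedBall x (t + ε))) (𝓝[>] 0)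
      (𝓝 (μ (Metric.closedBall x t))) := by
  have h := tendsto_measure_cthickening_of_isClosed (μ := μ)
    ⟨1, one_pos, measure_ne_top _ _⟩ (Metric.isClosed_closedBall (x := x) (ε := t))
  refine (h.mono_left nhdsWithin_le_nhds).congr' ?_
  filter_upwards [self_mem_nhdsWithin] with ε hε
  rw [cthickening_closedBall (le_of_lt hε) ht, add_comm]

lemma measure_le_gaussianReal_closedBall {Ω : Type*} [MeasurableSpace Ω] {P : Measure Ω}
    {R : Ω → ℝ} {D : ℕ → Ω → ℝ} {s : ℝ≥0}
    (hD : ∀ ε > 0, Tendsto (fun N => P {ω | ε ≤ D N ω}) atTop (𝓝 0))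
    (hY : ∀ᶠ N in atTop, ∃ (Y : Ω → ℝ) (v : ℝ≥0), s ≤ v ∧ HasLaw Y (gaussianReal 0 v) P ∧
      ∀ᵐ ω ∂P, |Y ω| ≤ R ω + D N ω)
    {t : ℝ} (ht : 0 ≤ t) :
    P {ω | R ω ≤ t} ≤ gaussianReal 0 s (Metric.closedBall 0 t) := by
  refine ge_of_tendsto (tendsto_measure_closedBall_add _ 0 ht) ?_
  filter_upwards [self_mem_nhdsWithin] with ε hε
  have hlim := (hD ε hε).const_add (gaussianReal 0 s (Metric.closedBall 0 (t + ε)))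
  rw [add_zero] at hlim
  refine ge_of_tendsto hlim ?_
  filter_upwards [hY] with N ⟨Y, v, hsv, hlaw, hbound⟩
  have hcover : ∀ᵐ ω ∂P, R ω ≤ t → Y ω ∈ Metric.closedBall 0 (t + ε) ∨ ε ≤ D N ω := by
    filter_upwards [hbound] with ω hω hR
    rw [mem_closedBall_zero_iff, Real.norm_eq_abs]
    by_contra! h
    linarith
  calc P {ω | R ω ≤ t}
      ≤ P ({ω | Y ω ∈ Metric.closedBall 0 (t + ε)} ∪ {ω | ε ≤ D N ω}) := measure_mono_ae hcover
    _ ≤ P {ω | Y ω ∈ Metric.closedBall 0 (t + ε)} + P {ω | ε ≤ D N ω} := measure_union_le _ _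
    _ = gaussianReal 0 v (Metric.closedBall 0 (t + ε)) + P {ω | ε ≤ D N ω} := by
        rw [hlaw.measure_eq (p := (· ∈ Metric.closedBall 0 (t + ε))) measurableSet_closedBall,
          Set.ofPred_mem_eq]
    _ ≤ gaussianReal 0 s (Metric.closedBall 0 (t + ε)) + P {ω | ε ≤ D N ω} :=
        add_le_add_left (antitone_gaussianReal_closedBall _ hsv) _

end Gaussian

section Configurations

lemma memC_iff_memℓp {p : ℕ} (hp : p ≠ 0) (ξ : PtCfg) :
    MemC p ξ ↔ Memℓp ξ.1 p ∧ Memℓp ξ.2 p := by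
  have hp' : 0 < (p : ℝ≥0∞).toReal := by simpa [Nat.pos_iff_ne_zero] using hp
  simp [MemC, memℓp_gen_iff hp']

lemma MemC.mono {p r : ℕ} {ξ : PtCfg} (hp : p ≠ 0) (hpr : p ≤ r) (h : MemC p ξ) : MemC r ξ := by
  rw [memC_iff_memℓp hp] at h
  rw [memC_iff_memℓp (by omega)]
  have hpr' : (p : ℝ≥0∞) ≤ r := mod_cast hpr
  exact ⟨h.1.of_exponent_ge hpr', h.2.of_exponent_ge hpr'⟩

lemma MemC.sub {p : ℕ} {ξ η : PtCfg} (hp : p ≠ 0) (hξ : MemC p ξ) (hη : MemC p η) :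
    MemC p (ξ - η) := by
  rw [memC_iff_memℓp hp] at *
  exact ⟨hξ.1.sub hη.1, hξ.2.sub hη.2⟩

lemma abs_sub_le_dPt {p : ℕ} {ξ η : PtCfg} (hp : p ≠ 0) (hξ : MemC p ξ) (hη : MemC p η) (n : ℕ) :
    |ξ.1 n - η.1 n| ≤ dPt p ξ η ∧ |ξ.2 n - η.2 n| ≤ dPt p ξ η := by
  obtain ⟨hsum₁, hsum₂⟩ := hξ.sub hp hη
  have le_dPt {t : ℝ} (ht : 0 ≤ t)
      (h : t ^ p ≤ (∑' n, |ξ.1 n - η.1 n| ^ p) + ∑' n, |ξ.2 n - η.2 n| ^ p) : t ≤ dPt p ξ η := by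
    rw [← Real.pow_rpow_inv_natCast ht hp]
    exact Real.rpow_le_rpow (by positivity) h (by positivity)
  refine ⟨le_dPt (abs_nonneg _) ?_, le_dPt (abs_nonneg _) ?_⟩
  · exact (hsum₁.le_tsum n fun _ _ => by positivity).trans
      (le_add_of_nonneg_right (tsum_nonneg fun _ => by positivity))
  · exact (hsum₂.le_tsum n fun _ _ => by positivity).trans
      (le_add_of_nonneg_left (tsum_nonneg fun _ => by positivity))

/-- The second moment `∫ x² ξ(dx) = ∑_{j≠0} α_j(ξ)²`. It has the junk value `0` on a part of `ξ`
that is not square summable. -/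
def secondMoment (ξ : PtCfg) : ℝ :=
  (∑' n, (ξ.1 n) ^ 2) + ∑' n, (ξ.2 n) ^ 2

lemma MemC.abs_le_sqrt_secondMoment {ξ : PtCfg} (h : MemC 2 ξ) (n : ℕ) :
    |ξ.1 n| ≤ √(secondMoment ξ) ∧ |ξ.2 n| ≤ √(secondMoment ξ) := by
  simp only [MemC, sq_abs] at h
  refine ⟨Real.abs_le_sqrt ?_, Real.abs_le_sqrt ?_⟩
  · exact (h.1.le_tsum n fun _ _ => by positivity).trans
      (le_add_of_nonneg_right (tsum_nonneg fun _ => by positivity))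
  · exact (h.2.le_tsum n fun _ _ => by positivity).trans
      (le_add_of_nonneg_left (tsum_nonneg fun _ => by positivity))

lemma exists_getD_eq_of_mem {α : Type*} {l : List α} {a : α} (d : α) (h : a ∈ l) :
    ∃ n, l.getD n d = a := by
  obtain ⟨n, hn, rfl⟩ := List.getElem_of_mem h
  exact ⟨n, List.getD_eq_getElem _ _ hn⟩

variable {N : ℕ} (A : Matrix (Fin N) (Fin N) ℝ)

lemma EMcfg_eq_zero_of_le {n : ℕ} (hn : N ≤ n) : (EMcfg A).1 n = 0 ∧ (EMcfg A).2 n = 0 := by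
  unfold EMcfg
  split_ifs
  · constructor <;> exact List.getD_eq_default _ _ (by simpa using hn)
  · exact ⟨rfl, rfl⟩

lemma memC_EMcfg {p : ℕ} (hp : p ≠ 0) : MemC p (EMcfg A) := by
  constructor <;> refine summable_of_ne_finset_zero (s := Finset.range N) fun n hn => ?_
  · simp [EMcfg_eq_zero_of_le A (by simpa using hn), hp]
  · simp [EMcfg_eq_zero_of_le A (by simpa using hn), hp]

variable {A}

lemma exists_EMcfg_eq_eigenvalues (hA : A.IsHermitian) (i : Fin N) :
    ∃ n, (EMcfg A).1 n = hA.eigenvalues i ∨ (EMcfg A).2 n = hA.eigenvalues i := by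
  simp only [EMcfg, dif_pos hA, exists_or]
  refine (le_total 0 (hA.eigenvalues i)).imp (fun h => ?_) fun h => ?_ <;>
    refine exists_getD_eq_of_mem 0 ?_ <;>
    rw [List.mem_insertionSort, List.mem_map] <;>
    refine ⟨hA.eigenvalues i, by simp [List.mem_ofFn], ?_⟩
  · exact max_eq_left h
  · exact min_eq_left h

lemma abs_eigenvalues_le_sqrt_secondMoment_add_dPt (hA : A.IsHermitian) {p : ℕ} (hp : 2 ≤ p)
    {ξ : PtCfg} (hξ : MemC 2 ξ) (i : Fin N) :
    |hA.eigenvalues i| ≤ √(secondMoment ξ) + dPt p (EMcfg A) ξ := by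
  have hp0 : p ≠ 0 := by omega
  obtain ⟨n, hn⟩ := exists_EMcfg_eq_eigenvalues hA i
  have hdist := abs_sub_le_dPt hp0 (memC_EMcfg A hp0) (hξ.mono two_ne_zero hp) n
  have hmoment := hξ.abs_le_sqrt_secondMoment n
  rcases hn with hn | hn
  · rw [← hn]
    linarith [abs_sub_abs_le_abs_sub ((EMcfg A).1 n) (ξ.1 n)]
  · rw [← hn]
    linarith [abs_sub_abs_le_abs_sub ((EMcfg A).2 n) (ξ.2 n)]

open scoped Matrix.Norms.L2Operator in
lemma l2_opNorm_le_sqrt_secondMoment_add_dPt (hA : A.IsHermitian) {p : ℕ} (hp : 2 ≤ p)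
    {ξ : PtCfg} (hξ : MemC 2 ξ) : ‖A‖ ≤ √(secondMoment ξ) + dPt p (EMcfg A) ξ := by
  rw [l2_opNorm_eq_norm_eigenvalues hA]
  refine (pi_norm_le_iff_of_nonneg ?_).2
    (abs_eigenvalues_le_sqrt_secondMoment_add_dPt hA hp hξ)
  unfold dPt
  positivity

end Configurations

section LatticeCharacters

/-- The pairing `⟨p, q⟩` of a lattice point `p` with a frequency `q`. -/
def latticePhase (p : ℤ × ℤ) (q : ℝ × ℝ) : ℝ :=
  p.1 * q.1 + p.2 * q.2

/-- The character `q ↦ e^{i⟨p, q⟩}` through which the lattice point `p` enters the Herglotz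
representation. -/
def latticeChar (p : ℤ × ℤ) (q : ℝ × ℝ) : ℂ :=
  Complex.exp (latticePhase p q * Complex.I)

@[fun_prop]
lemma continuous_latticeChar (p : ℤ × ℤ) : Continuous (latticeChar p) := by
  unfold latticeChar latticePhase
  fun_prop

lemma norm_latticeChar (p : ℤ × ℤ) (q : ℝ × ℝ) : ‖latticeChar p q‖ = 1 :=
  Complex.norm_exp_ofReal_mul_I _

lemma conj_latticeChar (p : ℤ × ℤ) (q : ℝ × ℝ) :
    starRingEnd ℂ (latticeChar p q) = Complex.exp (-latticePhase p q * Complex.I) := by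
  simp [latticeChar, ← Complex.exp_conj]

lemma conj_latticeChar_mul_latticeChar (p r : ℤ × ℤ) (q : ℝ × ℝ) :
    starRingEnd ℂ (latticeChar p q) * latticeChar r q = latticeChar (r - p) q := by
  rw [conj_latticeChar, latticeChar, latticeChar, ← Complex.exp_add]
  simp only [latticePhase, Prod.fst_sub, Prod.snd_sub]
  push_cast
  ring_nf

lemma latticeChar_mk (j k : ℤ) (q : ℝ × ℝ) :
    latticeChar (j, k) q = latticeChar (j, 0) q * latticeChar (0, k) q := by
  simp [latticeChar, latticePhase, ← Complex.exp_add, add_mul]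

/-- The lattice point indexing the entry `(i, j)` of `W_N`, whose rows and columns are numbered
from `1`. -/
def entryPoint {N : ℕ} (i : Fin N × Fin N) : ℤ × ℤ :=
  ((i.1 : ℕ) + 1, (i.2 : ℕ) + 1)

lemma exists_sq_le_two_mul_norm_sum_cos_mul_latticeChar (N : ℕ) (q : ℝ × ℝ) :
    ∃ θ : ℝ, (N : ℝ) ^ 2 ≤ 2 * ‖∑ i : Fin N × Fin N, (cos (θ + latticePhase (entryPoint i) q) : ℂ) *
      (latticeChar (entryPoint i) q + latticeChar (entryPoint i.swap) q)‖ := by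
  obtain ⟨θ, hθ⟩ := exists_norm_sum_exp_mul_le_two_mul_norm_sum_cos_mul
    (fun i : Fin N × Fin N => latticePhase (entryPoint i) q)
    (fun i => latticeChar (entryPoint i) q + latticeChar (entryPoint i.swap) q)
  refine ⟨θ, le_trans ?_ hθ⟩
  have hcard := card_sq_le_norm_sum_conj_mul_add_swap (ι := Fin N)
    (w := fun j => latticeChar ((j : ℕ) + 1, 0) q) (z := fun k => latticeChar (0, (k : ℕ) + 1) q)
    (fun _ => norm_latticeChar _ _) (fun _ => norm_latticeChar _ _)
  simpa only [Fintype.card_fin, Fintype.sum_prod_type, Prod.swap_prod_mk, entryPoint,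
    ← latticeChar_mk, conj_latticeChar] using hcard

end LatticeCharacters

section SpectralRepresentation

variable {Ω : Type*} [MeasurableSpace Ω] {P : Measure Ω} {X : ℤ → ℤ → Ω → ℝ}

lemma integral_norm_sq_sum_mul {𝕜 S ι : Type*} [RCLike 𝕜] [MeasurableSpace S] [Fintype ι]
    {μ : Measure S} {Z : ι → S → 𝕜} (hZ : ∀ i, MemLp (Z i) 2 μ) (a : ι → 𝕜) :
    ((∫ s, ‖∑ i, a i * Z i s‖ ^ 2 ∂μ : ℝ) : 𝕜) =
      ∑ i, ∑ j, starRingEnd 𝕜 (a i) * a j * ∫ s, starRingEnd 𝕜 (Z i s) * Z j s ∂μ := by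
  have hint (i j : ι) : Integrable (fun s => starRingEnd 𝕜 (Z i s) * Z j s) μ :=
    (hZ i).star.integrable_mul (hZ j)
  have expand (s : S) : ((‖∑ i, a i * Z i s‖ ^ 2 : ℝ) : 𝕜) =
      ∑ i, ∑ j, starRingEnd 𝕜 (a i) * a j * (starRingEnd 𝕜 (Z i s) * Z j s) := by
    push_cast
    simp_rw [← RCLike.conj_mul, map_sum, map_mul, Finset.sum_mul_sum, mul_mul_mul_comm]
  rw [← integral_ofReal]
  simp_rw [expand]
  rw [integral_finsetSum _ fun i _ => integrable_finsetSum _ fun j _ => (hint i j).const_mul _]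
  simp_rw [integral_finsetSum _ fun j _ => (hint _ j).const_mul _, integral_const_mul]

lemma StatGauss.exists_hasLaw_sum (hX : StatGauss P X) {ι : Type*} [Fintype ι]
    (p : ι → ℤ × ℤ) (a : ι → ℝ) :
    ∃ v : ℝ≥0, HasLaw (fun ω => ∑ i, a i * X (p i).1 (p i).2 ω) (gaussianReal 0 v) P := by
  classical
  obtain ⟨v, hv⟩ := hX.gauss (∑ i, Finsupp.single (p i) (a i))
  refine ⟨v, (Finset.measurable_fun_sum _ fun i _ => (hX.meas _ _).const_mul _).aemeasurable, ?_⟩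
  rw [← hv]
  congr with ω
  change _ = (∑ i, Finsupp.single (p i) (a i)).sum fun q r => r * X q.1 q.2 ω
  rw [← Finsupp.sum_finsetSum_index (by simp) (by intros; ring)]
  simp

lemma StatGauss.memLp (hX : StatGauss P X) (j k : ℤ) : MemLp (X j k) 2 P := by
  obtain ⟨v, hv⟩ := hX.exists_hasLaw_sum (fun _ : Unit => (j, k)) 1
  simpa using hv.hasGaussianLaw.memLp_two

/-- `ν` is the spectral measure of the process `X`: its Fourier coefficients are the covariances
of `X`. -/
structure IsSpectralMeasure (P : Measure Ω) (X : ℤ → ℤ → Ω → ℝ) (ν : Measure (ℝ × ℝ)) : Prop where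
  isFiniteMeasure : IsFiniteMeasure ν
  integral_latticeChar : ∀ u v : ℤ,
    ∫ q, latticeChar (u, v) q ∂ν = ((∫ ω, X 0 0 ω * X u v ω ∂P : ℝ) : ℂ)

variable {ν νd : Measure (ℝ × ℝ)} {f : ℝ × ℝ → ℝ}

lemma SpectralDecomp.isSpectralMeasure (hν : SpectralDecomp P X ν νd f) :
    IsSpectralMeasure P X ν where
  isFiniteMeasure := hν.finite
  integral_latticeChar u v := by
    rw [← hν.herglotz]
    simp only [latticeChar, latticePhase, mul_comm]

lemma exists_measure_singleton_ne_zero_of_countable {S : Type*} [MeasurableSpace S]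
    {μ : Measure S} {s : Set S} (hs : s.Countable) (hsμ : μ sᶜ = 0) (hμ : μ ≠ 0) :
    ∃ x, μ {x} ≠ 0 := by
  by_contra! hatom
  have hsnull : μ s = 0 := by
    rw [← Set.biUnion_of_singleton s]
    exact (measure_biUnion_null_iff hs).2 fun x _ => hatom x
  refine hμ (Measure.measure_univ_eq_zero.1 ?_)
  rw [← Set.union_compl_self s]
  exact measure_union_null hsnull hsμ

lemma SpectralDecomp.exists_measure_singleton_ne_zero (hν : SpectralDecomp P X ν νd f)
    (hνd : νd ≠ 0) : ∃ x, ν {x} ≠ 0 := by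
  obtain ⟨s, hs, hsνd⟩ := hν.discrete
  obtain ⟨x, hx⟩ := exists_measure_singleton_ne_zero_of_countable hs hsνd hνd
  refine ⟨x, fun h => hx ?_⟩
  rw [hν.decomp, Measure.add_apply] at h
  exact (add_eq_zero.1 h).2

lemma IsSpectralMeasure.integral_sq_sum_eq (hν : IsSpectralMeasure P X ν) (hX : StatGauss P X)
    {ι : Type*} [Fintype ι] (p : ι → ℤ × ℤ) (a : ι → ℝ) :
    ∫ ω, (∑ i, a i * X (p i).1 (p i).2 ω) ^ 2 ∂P =
      ∫ q, ‖∑ i, (a i : ℂ) * latticeChar (p i) q‖ ^ 2 ∂ν := by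
  have := hν.isFiniteMeasure
  have hchar (i : ι) : MemLp (latticeChar (p i)) 2 ν :=
    .of_bound (by fun_prop) 1 (.of_forall fun q => (norm_latticeChar _ _).le)
  have covariance (i j : ι) :
      ((∫ ω, X (p i).1 (p i).2 ω * X (p j).1 (p j).2 ω ∂P : ℝ) : ℂ) =
        ∫ q, starRingEnd ℂ (latticeChar (p i) q) * latticeChar (p j) q ∂ν := by
    simp_rw [conj_latticeChar_mul_latticeChar]
    rw [← Prod.mk.eta (p := p j - p i), hν.integral_latticeChar, ← hX.stat (p i).1 (p i).2]
    simp
  have space := integral_norm_sq_sum_mul (fun i => hX.memLp (p i).1 (p i).2) a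
  have freq := integral_norm_sq_sum_mul hchar (fun i => (a i : ℂ))
  simp only [Real.norm_eq_abs, sq_abs, conj_trivial, RCLike.ofReal_real_eq_id, id] at space
  apply Complex.ofReal_injective
  rw [space]
  refine Eq.trans ?_ freq.symm
  simp [covariance]

lemma IsSpectralMeasure.measureReal_mul_norm_sq_le_variance (hν : IsSpectralMeasure P X ν)
    (hX : StatGauss P X) {ι : Type*} [Fintype ι] (p : ι → ℤ × ℤ) (a : ι → ℝ) {v : ℝ≥0}
    (hv : HasLaw (fun ω => ∑ i, a i * X (p i).1 (p i).2 ω) (gaussianReal 0 v) P) (x : ℝ × ℝ) :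
    ν.real {x} * ‖∑ i, (a i : ℂ) * latticeChar (p i) x‖ ^ 2 ≤ v := by
  have := hν.isFiniteMeasure
  have hint : Integrable (fun q => ‖∑ i, (a i : ℂ) * latticeChar (p i) q‖ ^ 2) ν := by
    refine .of_bound (by fun_prop) ((∑ i, |a i|) ^ 2) (.of_forall fun q => ?_)
    rw [norm_pow, norm_norm]
    gcongr
    refine (norm_sum_le _ _).trans_eq (Finset.sum_congr rfl fun i _ => ?_)
    rw [norm_mul, norm_latticeChar, mul_one, Complex.norm_real, Real.norm_eq_abs]
  rw [variance_eq_integral_sq_of_hasLaw_gaussianReal hv, hν.integral_sq_sum_eq hX]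
  calc ν.real {x} * ‖∑ i, (a i : ℂ) * latticeChar (p i) x‖ ^ 2
      = ∫ q in {x}, ‖∑ i, (a i : ℂ) * latticeChar (p i) q‖ ^ 2 ∂ν := by
        rw [integral_singleton, smul_eq_mul]
    _ ≤ ∫ q, ‖∑ i, (a i : ℂ) * latticeChar (p i) q‖ ^ 2 ∂ν :=
        setIntegral_le_integral hint (.of_forall fun q => by positivity)

end SpectralRepresentation

section FourierCoefficient

/-- The cosine Fourier coefficient of a matrix at frequency `q` and phase shift `θ`, normalised so
that it is at most the operator norm of the matrix. -/
def cosCoeff {N : ℕ} (θ : ℝ) (q : ℝ × ℝ) (A : Matrix (Fin N) (Fin N) ℝ) : ℝ :=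
  (N : ℝ)⁻¹ * ∑ j, ∑ k, cos (θ + latticePhase (entryPoint (j, k)) q) * A j k

open scoped Matrix.Norms.L2Operator in
lemma abs_cosCoeff_le {N : ℕ} (θ : ℝ) (q : ℝ × ℝ) (A : Matrix (Fin N) (Fin N) ℝ) :
    |cosCoeff θ q A| ≤ ‖A‖ := by
  have hsum := abs_sum_cos_mul_le A (fun j => θ + ((j : ℕ) + 1) * q.1)
    (fun k => ((k : ℕ) + 1) * q.2)
  simp only [Fintype.card_fin, add_assoc] at hsum
  rw [cosCoeff, abs_mul, abs_of_nonneg (by positivity)]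
  refine inv_mul_le_of_le_mul₀ (by positivity) (by positivity) ?_
  simpa [latticePhase, entryPoint] using hsum

variable {Ω : Type*}

lemma isHermitian_scaledW1 (X : ℤ → ℤ → Ω → ℝ) (N : ℕ) (ω : Ω) : (scaledW1 X N ω).IsHermitian := by
  ext j k
  simp [scaledW1, add_comm]

lemma cosCoeff_scaledW1 (X : ℤ → ℤ → Ω → ℝ) (N : ℕ) (θ : ℝ) (q : ℝ × ℝ) (ω : Ω) :
    cosCoeff θ q (scaledW1 X N ω) =
      ∑ i : Fin N × Fin N, ((N : ℝ) ^ 2)⁻¹ * cos (θ + latticePhase (entryPoint i) q) *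
        (X (entryPoint i).1 (entryPoint i).2 ω +
          X (entryPoint i.swap).1 (entryPoint i.swap).2 ω) := by
  simp only [cosCoeff, scaledW1, Fintype.sum_prod_type, Finset.mul_sum]
  refine Finset.sum_congr rfl fun j _ => Finset.sum_congr rfl fun k _ => ?_
  simp only [entryPoint, Prod.swap_prod_mk]
  ring

variable [MeasurableSpace Ω] {P : Measure Ω} {X : ℤ → ℤ → Ω → ℝ} {ν : Measure (ℝ × ℝ)}

lemma IsSpectralMeasure.exists_hasLaw_sum_add (hν : IsSpectralMeasure P X ν)
    (hX : StatGauss P X) {ι : Type*} [Fintype ι] (p r : ι → ℤ × ℤ) (a : ι → ℝ) (x : ℝ × ℝ) :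
    ∃ v : ℝ≥0,
      ν.real {x} * ‖∑ i, (a i : ℂ) * (latticeChar (p i) x + latticeChar (r i) x)‖ ^ 2 ≤ v ∧
      HasLaw (fun ω => ∑ i, a i * (X (p i).1 (p i).2 ω + X (r i).1 (r i).2 ω))
        (gaussianReal 0 v) P := by
  obtain ⟨v, hv⟩ := hX.exists_hasLaw_sum (Sum.elim p r) (Sum.elim a a)
  have hvar := hν.measureReal_mul_norm_sq_le_variance hX _ _ hv x
  simp only [Fintype.sum_sum_type, Sum.elim_inl, Sum.elim_inr, ← Finset.sum_add_distrib,
    ← mul_add] at hv hvar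
  exact ⟨v, hvar, hv⟩

lemma IsSpectralMeasure.exists_hasLaw_cosCoeff (hν : IsSpectralMeasure P X ν)
    (hX : StatGauss P X) (x : ℝ × ℝ) {N : ℕ} (hN : N ≠ 0) :
    ∃ (θ : ℝ) (v : ℝ≥0), ν.real {x} / 4 ≤ v ∧
      HasLaw (fun ω => cosCoeff θ x (scaledW1 X N ω)) (gaussianReal 0 v) P := by
  obtain ⟨θ, hθ⟩ := exists_sq_le_two_mul_norm_sum_cos_mul_latticeChar N x
  obtain ⟨v, hvar, hlaw⟩ := hν.exists_hasLaw_sum_add hX entryPoint (entryPoint ∘ Prod.swap)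
    (fun i : Fin N × Fin N => ((N : ℝ) ^ 2)⁻¹ * cos (θ + latticePhase (entryPoint i) x)) x
  simp_rw [cosCoeff_scaledW1]
  refine ⟨θ, v, le_trans ?_ hvar, hlaw⟩
  simp_rw [Complex.ofReal_mul, mul_assoc, ← Finset.mul_sum, Function.comp_apply]
  set S := ∑ i : Fin N × Fin N, (cos (θ + latticePhase (entryPoint i) x) : ℂ) *
    (latticeChar (entryPoint i) x + latticeChar (entryPoint i.swap) x)
  have hhalf : 1 / 2 ≤ ‖(((N : ℝ) ^ 2)⁻¹ : ℝ) * S‖ := by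
    rw [norm_mul, Complex.norm_of_nonneg (by positivity), le_inv_mul_iff₀ (by positivity)]
    linarith
  calc ν.real {x} / 4 = ν.real {x} * (1 / 2) ^ 2 := by ring
    _ ≤ ν.real {x} * ‖(((N : ℝ) ^ 2)⁻¹ : ℝ) * S‖ ^ 2 := by gcongr

end FourierCoefficient

section MainTheorem

variable {Ω : Type*} [MeasurableSpace Ω] {P : Measure Ω} {X : ℤ → ℤ → Ω → ℝ}
  {ν : Measure (ℝ × ℝ)}

lemma measure_sqrt_secondMoment_le_le_gaussianReal (hX : StatGauss P X)
    (hν : IsSpectralMeasure P X ν) (x : ℝ × ℝ) {ξ : Ω → PtCfg} (hξmem : ∀ᵐ ω ∂P, MemC 2 (ξ ω))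
    {p : ℕ} (hp : 2 ≤ p)
    (hξconv : ∀ ε > 0, Tendsto (fun N => P {ω | ε ≤ dPt p (EMcfg (scaledW1 X N ω)) (ξ ω)})
      atTop (𝓝 0)) {t : ℝ} (ht : 0 ≤ t) :
    P {ω | √(secondMoment (ξ ω)) ≤ t} ≤
      gaussianReal 0 (ν.real {x} / 4).toNNReal (Metric.closedBall 0 t) := by
  refine measure_le_gaussianReal_closedBall hξconv ?_ ht
  filter_upwards [eventually_ne_atTop 0] with N hN
  obtain ⟨θ, v, hv, hlaw⟩ := hν.exists_hasLaw_cosCoeff hX x hN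
  refine ⟨_, v, Real.toNNReal_le_iff_le_coe.2 hv, hlaw, ?_⟩
  filter_upwards [hξmem] with ω hω
  exact (abs_cosCoeff_le θ x _).trans
    (l2_opNorm_le_sqrt_secondMoment_add_dPt (isHermitian_scaledW1 X N ω) hp hω)

theorem statement7_general [IsProbabilityMeasure P] (hX : StatGauss P X)
    (hν : IsSpectralMeasure P X ν) {x : ℝ × ℝ} (hx : ν {x} ≠ 0)
    {ξ : Ω → PtCfg} (hξmem : ∀ᵐ ω ∂P, MemC 2 (ξ ω)) {p : ℕ} (hp : 2 ≤ p)
    (hξconv : ∀ ε > 0, Tendsto (fun N => P {ω | ε ≤ dPt p (EMcfg (scaledW1 X N ω)) (ξ ω)})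
      atTop (𝓝 0)) :
    (∀ᵐ ω ∂P, 0 < secondMoment (ξ ω)) ∧
      ¬∃ c : ℝ, (fun ω => secondMoment (ξ ω)) =ᵐ[P] fun _ => c := by
  have := hν.isFiniteMeasure
  have hvar : (ν.real {x} / 4).toNNReal ≠ 0 := by
    have hpos : 0 < ν.real {x} := ENNReal.toReal_pos hx (measure_ne_top _ _)
    simpa using hpos
  have domination {t : ℝ} (ht : 0 ≤ t) :=
    measure_sqrt_secondMoment_le_le_gaussianReal hX hν x hξmem hp hξconv ht
  constructor
  · have := nullSingletonClass_gaussianReal (μ := 0) hvar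
    have hzero : P {ω | √(secondMoment (ξ ω)) ≤ 0} = 0 := by simpa using domination le_rfl
    filter_upwards [measure_eq_zero_iff_ae_notMem.1 hzero] with ω hω
    simpa using hω
  · rintro ⟨c, hc⟩
    have hone : P {ω | √(secondMoment (ξ ω)) ≤ √c} = 1 := by
      refine prob_le_one.antisymm ?_
      rw [← measure_univ (μ := P)]
      exact measure_mono_ae (hc.mono fun ω hω _ => Real.sqrt_le_sqrt hω.le)
    have hlt := gaussianReal_closedBall_lt_one 0 hvar 0 √c
    exact (hone.ge.trans (domination (Real.sqrt_nonneg c))).not_gt hlt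

end MainTheorem

/-- **Theorem 7.** If `ν_d((-π,π]²) > 0`, then `∫ x² ξ(dx)` is almost surely
strictly positive and is a non-degenerate random variable. -/
theorem statement7 {Ω : Type} [MeasurableSpace Ω] (P : Measure Ω)
    [IsProbabilityMeasure P] (X : ℤ → ℤ → Ω → ℝ) (ν νd : Measure (ℝ × ℝ))
    (f : ℝ × ℝ → ℝ) (hX : StatGauss P X) (hν : SpectralDecomp P X ν νd f)
    (hνd : 0 < νd specBox)
    (ξ : Ω → PtCfg) (hξmem : ∀ᵐ ω ∂P, MemC 2 (ξ ω))
    (hξconv : ∀ ε > 0, Tendsto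
      (fun N => P {ω | ε ≤ dPt 4 (EMcfg (scaledW1 X N ω)) (ξ ω)})
      atTop (nhds 0)) :
    (∀ᵐ ω ∂P, 0 < (∑' n, ((ξ ω).1 n) ^ 2) + ∑' n, ((ξ ω).2 n) ^ 2) ∧
    ¬∃ c : ℝ,
      (fun ω => (∑' n, ((ξ ω).1 n) ^ 2) + ∑' n, ((ξ ω).2 n) ^ 2)
        =ᵐ[P] fun _ => c := by
  have hνd_ne : νd ≠ 0 := fun h => by simp [h] at hνd
  obtain ⟨x, hx⟩ := hν.exists_measure_singleton_ne_zero hνd_ne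
  exact statement7_general hX hν.isSpectralMeasure hx hξmem (by norm_num) hξconv

end
end

section
/- Suppose for each 1 ≤ n ≤ ∞, g_n is a nonnegative, integrable, even function on [−π,π]² (i.e., g_n(x,y) = g_n(−x,−y) for almost all x,y), and g_n → g_∞ in L¹([−π,π]²) as n → ∞. For each n let μ_{g_n} denote the deterministic probability measure to which ESD(W_N/√N) converges weakly in probability when the input process is a centered stationary Gaussian process with spectral measure g_n(x,y) dx dy. Then μ_{g_n} converges weakly to μ_{g_∞} as n → ∞. -/
open MeasureTheory ProbabilityTheory Filter Real

noncomputable section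

/-- The process `X` has absolutely continuous spectral measure with density
`h` on `(-π,π]²`: `E[X_{0,0} X_{u,v}] = ∫∫ e^{i(ux+vy)} h(x,y) dx dy`. -/
def HasSpecDensity {Ω : Type*} [MeasurableSpace Ω] (P : Measure Ω)
    (X : ℤ → ℤ → Ω → ℝ) (h : ℝ × ℝ → ℝ) : Prop :=
  ∀ u v : ℤ,
    (∫ q in specBox,
        Complex.exp (Complex.I * ((u * q.1 + v * q.2 : ℝ) : ℂ)) * ((h q : ℝ) : ℂ))
      = ((∫ ω, X 0 0 ω * X u v ω ∂P : ℝ) : ℂ)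

/-- `μ` is the limiting spectral distribution of the matrices `W_N/√N` built
from some centered stationary Gaussian process whose spectral measure is
absolutely continuous with density `h`. -/
def IsLSDofDensity (h : ℝ × ℝ → ℝ) (μ : Measure ℝ) : Prop :=
  ∃ (Ω : Type) (_ : MeasurableSpace Ω) (P : Measure Ω),
    IsProbabilityMeasure P ∧ ∃ X : ℤ → ℤ → Ω → ℝ,
      StatGauss P X ∧ HasSpecDensity P X h ∧ ESDTendstoInProb P (scaledW X) μ

/-!
Fix a bounded `K`-Lipschitz function `F`. Pairing the eigenvalues of two Hermitian matrices through
the squared overlaps of their eigenvectors shows that the statistic `∫ F d(ESD(W_N/√N))` is a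
`2K/N`-Lipschitz function of the `N²` Gaussian entries `X_{i,j}`.

The covariance matrix of these entries is linear in the spectral density. If `h` and `k` are two
densities, then `h` exceeds `h ⊓ k` by a density `h - h ⊓ k` whose covariance matrix is positive
semidefinite with trace `N² ∫ (h - h ⊓ k) ≤ N² ∫ |h - k|`. Since `N(0, S + T) = N(0, S) ∗ N(0, T)`,
passing from `h ⊓ k` to `h` adds an independent Gaussian vector of expected norm at most
`N √(∫ |h - k|)`, so it moves the mean of the statistic by at most `2K √(∫ |h - k|)`. The same
holds for `k`. This bound does not depend on `N` and passes to the limit: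
`|∫ F dμ_h - ∫ F dμ_k| ≤ 4K √(∫ |h - k|)`.
-/

open scoped NNReal

section Frobenius

open scoped Matrix.Norms.Frobenius

variable {𝕜 m n κ : Type*} [RCLike 𝕜] [Fintype m] [Fintype n] [Fintype κ]

lemma frobenius_norm_sq_eq_sum (T : Matrix m n 𝕜) : ‖T‖ ^ 2 = ∑ i, ∑ j, ‖T i j‖ ^ 2 := by
  have hsum : 0 ≤ ∑ i, ∑ j, ‖T i j‖ ^ 2 := by positivity
  simp_rw [Matrix.frobenius_norm_def, Real.rpow_two, ← Real.sqrt_eq_rpow, Real.sq_sqrt hsum]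

lemma sum_norm_sq_toEuclideanLin_orthonormalBasis [DecidableEq n]
    (v : OrthonormalBasis κ 𝕜 (EuclideanSpace 𝕜 n)) (T : Matrix m n 𝕜) :
    ∑ j, ‖Matrix.toEuclideanLin T (v j)‖ ^ 2 = ‖T‖ ^ 2 := by
  let row (k : m) : EuclideanSpace 𝕜 n := WithLp.toLp 2 fun l => star (T k l)
  have entry (j : κ) (k : m) : Matrix.toEuclideanLin T (v j) k = inner 𝕜 (row k) (v j) := by
    simp [row, Matrix.toLpLin_apply, Matrix.mulVec, dotProduct, PiLp.inner_apply, mul_comm]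
  calc ∑ j, ‖Matrix.toEuclideanLin T (v j)‖ ^ 2
      = ∑ k, ∑ j, ‖inner 𝕜 (row k) (v j)‖ ^ 2 := by
        simp_rw [EuclideanSpace.norm_sq_eq, entry]
        exact Finset.sum_comm
    _ = ‖T‖ ^ 2 := by
        simp_rw [v.sum_sq_norm_inner_left, EuclideanSpace.norm_sq_eq, frobenius_norm_sq_eq_sum]
        simp [row]

section Eigenvalues

variable [DecidableEq n] {A B : Matrix n n 𝕜} (hA : A.IsHermitian) (hB : B.IsHermitian)

lemma toEuclideanLin_eigenvectorBasis (j : n) :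
    Matrix.toEuclideanLin A (hA.eigenvectorBasis j) =
      (hA.eigenvalues j : 𝕜) • hA.eigenvectorBasis j := by
  ext k
  have := congrFun (hA.mulVec_eigenvectorBasis j) k
  simpa [Matrix.toLpLin_apply, RCLike.real_smul_eq_coe_mul] using this

lemma inner_eigenvectorBasis_toEuclideanLin_sub (i j : n) :
    inner 𝕜 (hA.eigenvectorBasis i) (Matrix.toEuclideanLin (A - B) (hB.eigenvectorBasis j)) =
      ((hA.eigenvalues i - hB.eigenvalues j : ℝ) : 𝕜) *
        inner 𝕜 (hA.eigenvectorBasis i) (hB.eigenvectorBasis j) := by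
  rw [map_sub, LinearMap.sub_apply, inner_sub_right, ← Matrix.isSymmetric_toEuclideanLin_iff.2 hA,
    toEuclideanLin_eigenvectorBasis, toEuclideanLin_eigenvectorBasis, inner_smul_left,
    inner_smul_right, RCLike.conj_ofReal]
  push_cast
  ring

/-- The squared overlaps of two orthonormal eigenbases form a doubly stochastic matrix, which is a
transport plan between the two spectra; its quadratic cost is exact. -/
lemma sum_sq_sub_eigenvalues_mul_sq_norm_inner :
    ∑ i, ∑ j, (hA.eigenvalues i - hB.eigenvalues j) ^ 2 *
      ‖inner 𝕜 (hA.eigenvectorBasis i) (hB.eigenvectorBasis j)‖ ^ 2 = ‖A - B‖ ^ 2 := by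
  have overlap (i j : n) : (hA.eigenvalues i - hB.eigenvalues j) ^ 2 *
      ‖inner 𝕜 (hA.eigenvectorBasis i) (hB.eigenvectorBasis j)‖ ^ 2 =
      ‖inner 𝕜 (hA.eigenvectorBasis i)
        (Matrix.toEuclideanLin (A - B) (hB.eigenvectorBasis j))‖ ^ 2 := by
    rw [inner_eigenvectorBasis_toEuclideanLin_sub, norm_mul, mul_pow, RCLike.norm_ofReal, sq_abs]
  simp_rw [overlap]
  rw [Finset.sum_comm]
  simp_rw [hA.eigenvectorBasis.sum_sq_norm_inner_right]
  exact sum_norm_sq_toEuclideanLin_orthonormalBasis hB.eigenvectorBasis (A - B)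

lemma sum_abs_sub_eigenvalues_mul_sq_norm_inner_le :
    ∑ i, ∑ j, |hA.eigenvalues i - hB.eigenvalues j| *
      ‖inner 𝕜 (hA.eigenvectorBasis i) (hB.eigenvectorBasis j)‖ ^ 2 ≤
      √(Fintype.card n) * ‖A - B‖ := by
  have cauchy_schwarz := Real.sum_mul_le_sqrt_mul_sqrt (Finset.univ : Finset (n × n))
    (fun p => ‖inner 𝕜 (hA.eigenvectorBasis p.1) (hB.eigenvectorBasis p.2)‖)
    (fun p => |hA.eigenvalues p.1 - hB.eigenvalues p.2| *
      ‖inner 𝕜 (hA.eigenvectorBasis p.1) (hB.eigenvectorBasis p.2)‖)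
  simp only [Fintype.sum_prod_type, mul_pow, sq_abs, sum_sq_sub_eigenvalues_mul_sq_norm_inner,
    hB.eigenvectorBasis.sum_sq_norm_inner_left, hA.eigenvectorBasis.norm_eq_one, one_pow,
    Finset.sum_const, Finset.card_univ, nsmul_eq_mul, mul_one,
    Real.sqrt_sq (norm_nonneg (A - B))] at cauchy_schwarz
  refine le_of_eq_of_le ?_ cauchy_schwarz
  refine Finset.sum_congr rfl fun i _ => Finset.sum_congr rfl fun j _ => ?_
  ring

lemma dist_sum_comp_eigenvalues_le {K : ℝ≥0} {F : ℝ → ℝ} (hF : LipschitzWith K F) :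
    dist (∑ i, F (hA.eigenvalues i)) (∑ j, F (hB.eigenvalues j)) ≤
      K * (√(Fintype.card n) * ‖A - B‖) := by
  set a := hA.eigenvalues
  set b := hB.eigenvalues
  set w : n → n → ℝ :=
    fun i j => ‖inner 𝕜 (hA.eigenvectorBasis i) (hB.eigenvectorBasis j)‖ ^ 2 with hw
  have row_sum (i : n) : ∑ j, w i j = 1 := by
    simp [hw, hB.eigenvectorBasis.sum_sq_norm_inner_left]
  have col_sum (j : n) : ∑ i, w i j = 1 := by
    simp [hw, hA.eigenvectorBasis.sum_sq_norm_inner_right]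
  have coupling : ∑ i, F (a i) - ∑ j, F (b j) = ∑ i, ∑ j, (F (a i) - F (b j)) * w i j := by
    simp_rw [sub_mul, Finset.sum_sub_distrib]
    rw [Finset.sum_comm (f := fun i j => F (b j) * w i j)]
    simp_rw [← Finset.mul_sum, row_sum, col_sum, mul_one]
  calc dist (∑ i, F (a i)) (∑ j, F (b j))
      ≤ ∑ i, ∑ j, |(F (a i) - F (b j)) * w i j| := by
        rw [Real.dist_eq, coupling]
        exact (Finset.abs_sum_le_sum_abs _ _).trans
          (Finset.sum_le_sum fun i _ => Finset.abs_sum_le_sum_abs _ _)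
    _ ≤ ∑ i, ∑ j, K * (|a i - b j| * w i j) := by
        gcongr with i _ j _
        have hwij : 0 ≤ w i j := sq_nonneg _
        rw [abs_mul, abs_of_nonneg hwij, ← mul_assoc]
        exact mul_le_mul_of_nonneg_right (hF.dist_le_mul (a i) (b j)) hwij
    _ = K * ∑ i, ∑ j, |a i - b j| * w i j := by simp_rw [Finset.mul_sum]
    _ ≤ K * (√(Fintype.card n) * ‖A - B‖) := by
        gcongr
        exact sum_abs_sub_eigenvalues_mul_sq_norm_inner_le hA hB

end Eigenvalues
end Frobenius

section AddTranspose

open scoped Matrix.Norms.Frobenius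

variable {n : Type*}

/-- The symmetric matrix `M + Mᵀ`, where `M` is the square matrix whose entries are listed by the
vector `x`. Taking Euclidean vectors makes the Frobenius norm of `M` the norm of `x`. -/
def addTranspose : EuclideanSpace ℝ (n × n) →ₗ[ℝ] Matrix n n ℝ where
  toFun x := .of fun i j => x (i, j) + x (j, i)
  map_add' x y := by ext i j; simp [add_add_add_comm]
  map_smul' c x := by ext i j; simp [mul_add]

lemma isHermitian_addTranspose (x : EuclideanSpace ℝ (n × n)) :
    (addTranspose x).IsHermitian := by
  ext i j
  simp [addTranspose, add_comm]

lemma norm_addTranspose_le [Fintype n] (x : EuclideanSpace ℝ (n × n)) :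
    ‖addTranspose x‖ ≤ 2 * ‖x‖ := by
  let M : Matrix n n ℝ := .of fun i j => x (i, j)
  have norm_M : ‖M‖ = ‖x‖ := by
    rw [← sq_eq_sq₀ (norm_nonneg _) (norm_nonneg _), frobenius_norm_sq_eq_sum,
      EuclideanSpace.norm_sq_eq, Fintype.sum_prod_type]
    simp [M]
  calc ‖addTranspose x‖ = ‖M + M.transpose‖ := rfl
    _ ≤ ‖M‖ + ‖M.transpose‖ := norm_add_le _ _
    _ = 2 * ‖x‖ := by rw [Matrix.frobenius_norm_transpose, norm_M, two_mul]

end AddTranspose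

section EmpiricalSpectralDistribution

open scoped Matrix.Norms.Frobenius

variable {N : ℕ} {F : ℝ → ℝ}

lemma abs_esdEval_le {C : ℝ} (hC : ∀ x, |F x| ≤ C) (A : Matrix (Fin N) (Fin N) ℝ) :
    |esdEval A F| ≤ C := by
  have hC0 : 0 ≤ C := (abs_nonneg _).trans (hC 0)
  unfold esdEval
  split_ifs with hA
  · calc |(N : ℝ)⁻¹ * ∑ j, F (hA.eigenvalues j)|
        ≤ (N : ℝ)⁻¹ * ∑ j, |F (hA.eigenvalues j)| := by
          rw [abs_mul, abs_of_nonneg (by positivity)]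
          gcongr
          exact Finset.abs_sum_le_sum_abs _ _
      _ ≤ (N : ℝ)⁻¹ * ∑ _j : Fin N, C := by gcongr with j; exact hC _
      _ ≤ C := by
          rw [Finset.sum_const, Finset.card_univ, Fintype.card_fin, nsmul_eq_mul, ← mul_assoc]
          exact mul_le_of_le_one_left hC0 inv_mul_le_one
  · simpa using hC0

lemma dist_esdEval_le {A B : Matrix (Fin N) (Fin N) ℝ} (hA : A.IsHermitian) (hB : B.IsHermitian)
    {K : ℝ≥0} (hF : LipschitzWith K F) :
    dist (esdEval A F) (esdEval B F) ≤ K / √N * ‖A - B‖ := by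
  have h := dist_sum_comp_eigenvalues_le hA hB hF
  rw [Fintype.card_fin, Real.dist_eq] at h
  rw [esdEval, esdEval, dif_pos hA, dif_pos hB, Real.dist_eq, ← mul_sub, abs_mul,
    abs_of_nonneg (by positivity : (0 : ℝ) ≤ (N : ℝ)⁻¹)]
  calc (N : ℝ)⁻¹ * |∑ j, F (hA.eigenvalues j) - ∑ j, F (hB.eigenvalues j)|
      ≤ (N : ℝ)⁻¹ * (K * (√N * ‖A - B‖)) := by gcongr
    _ = √N / N * (K * ‖A - B‖) := by ring
    _ = K / √N * ‖A - B‖ := by rw [Real.sqrt_div_self']; ring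

/-- The statistic `∫ F d(ESD(W_N/√N))` as a function of the vector `x` of the `N²` entries
`X_{i,j}`. -/
def esdStat (F : ℝ → ℝ) (N : ℕ) (x : EuclideanSpace ℝ (Fin N × Fin N)) : ℝ :=
  esdEval ((√N)⁻¹ • addTranspose x) F

lemma lipschitzWith_esdStat {K : ℝ≥0} (hF : LipschitzWith K F) (N : ℕ) :
    LipschitzWith (2 * K / N) (esdStat F N) := by
  refine LipschitzWith.of_dist_le_mul fun x y => ?_
  have hermitian (z) : ((√N)⁻¹ • addTranspose (n := Fin N) z).IsHermitian :=
    (isHermitian_addTranspose z).smul (.all _)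
  calc dist (esdStat F N x) (esdStat F N y)
      ≤ K / √N * ‖(√N)⁻¹ • addTranspose x - (√N)⁻¹ • addTranspose y‖ :=
        dist_esdEval_le (hermitian x) (hermitian y) hF
    _ = K / √N * ((√N)⁻¹ * ‖addTranspose (x - y)‖) := by
        rw [← smul_sub, ← map_sub, norm_smul, Real.norm_of_nonneg (by positivity)]
    _ ≤ K / √N * ((√N)⁻¹ * (2 * ‖x - y‖)) := by
        gcongr
        exact norm_addTranspose_le _
    _ = 2 * K / (√N * √N) * dist x y := by rw [dist_eq_norm]; ring
    _ = (2 * K / N : ℝ≥0) * dist x y := by rw [Real.mul_self_sqrt N.cast_nonneg]; push_cast; rfl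

end EmpiricalSpectralDistribution

section GaussianPerturbation

lemma integral_norm_le_sqrt_integral_norm_sq {Ω E : Type*} [MeasurableSpace Ω]
    [NormedAddCommGroup E] {P : Measure Ω} [IsProbabilityMeasure P] {f : Ω → E}
    (hf : MemLp f 2 P) : ∫ ω, ‖f ω‖ ∂P ≤ √(∫ ω, ‖f ω‖ ^ 2 ∂P) := by
  have h := variance_nonneg (fun ω => ‖f ω‖) P
  rw [variance_eq_sub hf.norm] at h
  exact Real.le_sqrt_of_sq_le (sub_nonneg.1 h)

/-- Couple `μ ∗ ν` with `μ` by adding an independent `ν`-distributed vector. -/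
lemma dist_integral_conv_le {E F : Type*} [NormedAddCommGroup E] [MeasurableSpace E]
    [BorelSpace E] [SecondCountableTopology E] [NormedAddCommGroup F] [NormedSpace ℝ F]
    {μ ν : Measure E} [IsProbabilityMeasure μ] [IsProbabilityMeasure ν] {K : ℝ≥0} {f : E → F}
    (hf : LipschitzWith K f) (hμ : Integrable f μ) (hν : Integrable (fun y => y) ν) :
    dist (∫ x, f x ∂(μ ∗ ν)) (∫ x, f x ∂μ) ≤ K * ∫ y, ‖y‖ ∂ν := by
  have increment (p : E × E) : ‖f (p.1 + p.2) - f p.1‖ ≤ K * ‖p.2‖ := by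
    simpa using hf.norm_sub_le (p.1 + p.2) p.1
  have int_fst : Integrable (fun p : E × E => f p.1) (μ.prod ν) := hμ.comp_fst ν
  have int_norm_snd : Integrable (fun p : E × E => K * ‖p.2‖) (μ.prod ν) :=
    (hν.norm.comp_snd μ).const_mul _
  have int_increment : Integrable (fun p : E × E => f (p.1 + p.2) - f p.1) (μ.prod ν) :=
    int_norm_snd.mono' (by have := hf.continuous; fun_prop) (ae_of_all _ increment)
  have int_add : Integrable (fun p : E × E => f (p.1 + p.2)) (μ.prod ν) :=
    (int_increment.add int_fst).congr (ae_of_all _ fun p => sub_add_cancel _ _)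
  calc dist (∫ x, f x ∂(μ ∗ ν)) (∫ x, f x ∂μ)
      = ‖∫ p, (f (p.1 + p.2) - f p.1) ∂(μ.prod ν)‖ := by
        rw [dist_eq_norm, Measure.conv, integral_map (by fun_prop)
          hf.continuous.aestronglyMeasurable, integral_sub int_add int_fst, integral_fun_fst]
        simp
    _ ≤ ∫ p, K * ‖p.2‖ ∂(μ.prod ν) :=
        norm_integral_le_of_norm_le int_norm_snd (ae_of_all _ increment)
    _ = K * ∫ y, ‖y‖ ∂ν := by
        rw [integral_fun_snd (fun y : E => K * ‖y‖), integral_const_mul]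
        simp

variable {ι : Type*} [Fintype ι] [DecidableEq ι] {S T : Matrix ι ι ℝ}

lemma multivariateGaussian_conv (a b : EuclideanSpace ℝ ι) (hS : S.PosSemidef)
    (hT : T.PosSemidef) :
    multivariateGaussian a S ∗ multivariateGaussian b T =
      multivariateGaussian (a + b) (S + T) := by
  refine Measure.ext_of_charFun (funext fun t => ?_)
  rw [charFun_conv, charFun_multivariateGaussian (hS.add hT), charFun_multivariateGaussian hS,
    charFun_multivariateGaussian hT, ← Complex.exp_add, inner_add_right, Matrix.add_mulVec,
    dotProduct_add]
  push_cast
  ring_nf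

lemma integral_eval_multivariateGaussian (a : EuclideanSpace ℝ ι) (S : Matrix ι ι ℝ) (i : ι) :
    ∫ y, y i ∂(multivariateGaussian a S) = a i := by
  rw [← EuclideanSpace.coe_proj, ContinuousLinearMap.integral_comp_id_comm IsGaussian.integrable_id,
    integral_id_multivariateGaussian]
  rfl

lemma integral_norm_sub_sq_multivariateGaussian (a : EuclideanSpace ℝ ι) (hS : S.PosSemidef) :
    ∫ y, ‖y - a‖ ^ 2 ∂(multivariateGaussian a S) = S.trace := by
  have memLp (i : ι) : MemLp (fun y : EuclideanSpace ℝ ι => y i - a i) 2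
      (multivariateGaussian a S) :=
    ((EuclideanSpace.proj (𝕜 := ℝ) i).comp_memLp' IsGaussian.memLp_two_id).sub (memLp_const _)
  simp_rw [EuclideanSpace.norm_sq_eq, PiLp.sub_apply, Real.norm_eq_abs, sq_abs]
  rw [integral_finsetSum _ fun i _ => (memLp i).integrable_sq]
  refine Finset.sum_congr rfl fun i _ => ?_
  rw [Matrix.diag_apply, ← variance_eval_multivariateGaussian (μ := a) hS i,
    variance_eq_integral (by fun_prop), integral_eval_multivariateGaussian]

lemma integral_norm_multivariateGaussian_zero_le (hS : S.PosSemidef) :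
    ∫ y, ‖y‖ ∂(multivariateGaussian 0 S) ≤ √S.trace := by
  simpa [← integral_norm_sub_sq_multivariateGaussian 0 hS] using
    integral_norm_le_sqrt_integral_norm_sq (P := multivariateGaussian 0 S) IsGaussian.memLp_two_id

lemma integrable_of_lipschitzWith_of_isGaussian {E F : Type*} [NormedAddCommGroup E]
    [NormedSpace ℝ E] [MeasurableSpace E] [BorelSpace E] [CompleteSpace E]
    [SecondCountableTopology E] [NormedAddCommGroup F] {μ : Measure E} [IsGaussian μ] {K : ℝ≥0}
    {f : E → F} (hf : LipschitzWith K f) : Integrable f μ := by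
  have bound : Integrable (fun x => ‖f 0‖ + K * ‖x‖) μ :=
    (integrable_const _).add (IsGaussian.integrable_fun_id.norm.const_mul _)
  refine bound.mono' hf.continuous.aestronglyMeasurable (ae_of_all _ fun x => ?_)
  have increment : ‖f x - f 0‖ ≤ K * ‖x‖ := by simpa using hf.norm_sub_le x 0
  linarith [norm_sub_norm_le (f x) (f 0)]

lemma dist_integral_multivariateGaussian_add_le {F : Type*} [NormedAddCommGroup F]
    [NormedSpace ℝ F] (a : EuclideanSpace ℝ ι) (hS : S.PosSemidef) (hT : T.PosSemidef) {K : ℝ≥0}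
    {f : EuclideanSpace ℝ ι → F} (hf : LipschitzWith K f) :
    dist (∫ x, f x ∂(multivariateGaussian a (S + T))) (∫ x, f x ∂(multivariateGaussian a S)) ≤
      K * √T.trace := by
  have conv : multivariateGaussian a (S + T) =
      multivariateGaussian a S ∗ multivariateGaussian 0 T := by
    rw [multivariateGaussian_conv a 0 hS hT, add_zero]
  calc dist (∫ x, f x ∂(multivariateGaussian a (S + T))) (∫ x, f x ∂(multivariateGaussian a S))
      ≤ K * ∫ y, ‖y‖ ∂(multivariateGaussian 0 T) := by
        rw [conv]
        exact dist_integral_conv_le hf (integrable_of_lipschitzWith_of_isGaussian hf)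
          IsGaussian.integrable_fun_id
    _ ≤ K * √T.trace := by
        gcongr
        exact integral_norm_multivariateGaussian_zero_le hT

lemma map_toLp_eq_multivariateGaussian {Ω : Type*} [MeasurableSpace Ω] {P : Measure Ω}
    {Z : ι → Ω → ℝ} (hZ : HasGaussianLaw (fun ω => WithLp.toLp 2 (Z · ω)) P)
    {a : EuclideanSpace ℝ ι} (hmean : ∀ i, ∫ ω, Z i ω ∂P = a i) (hS : S.PosSemidef)
    (hcov : ∀ i j, cov[Z i, Z j; P] = S i j) :
    P.map (fun ω => WithLp.toLp 2 (Z · ω)) = multivariateGaussian a S := by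
  have := hZ.isProbabilityMeasure
  have := hZ.isGaussian_map
  have memLp (i : ι) : MemLp (Z i) 2 P := (hZ.map_fun (EuclideanSpace.proj (𝕜 := ℝ) i)).memLp_two
  refine IsGaussian.ext ?_ ?_
  · rw [integral_id_multivariateGaussian', integral_map hZ.aemeasurable (by fun_prop)]
    ext i
    rw [← hmean i]
    exact ((EuclideanSpace.proj (𝕜 := ℝ) i).integral_comp_comm hZ.integrable).symm
  · ext x y
    rw [covarianceBilin_apply_pi memLp, covarianceBilin_multivariateGaussian hS]
    simp only [hcov, dotProduct, Matrix.mulVec, Finset.mul_sum]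
    exact Finset.sum_congr rfl fun i _ => Finset.sum_congr rfl fun j _ => by ring

end GaussianPerturbation

section DominatedConvergence

lemma tendsto_integral_of_dominated_of_tendstoInMeasure {Ω E ι : Type*} [MeasurableSpace Ω]
    [NormedAddCommGroup E] [NormedSpace ℝ E] {P : Measure Ω} {l : Filter ι}
    [l.IsCountablyGenerated] {f : ι → Ω → E} {g : Ω → E} {bound : Ω → ℝ}
    (hf : ∀ i, AEStronglyMeasurable (f i) P) (hbound : Integrable bound P)
    (hle : ∀ i, ∀ᵐ ω ∂P, ‖f i ω‖ ≤ bound ω) (hfg : TendstoInMeasure P f l g) :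
    Tendsto (fun i => ∫ ω, f i ω ∂P) l (nhds (∫ ω, g ω ∂P)) := by
  refine tendsto_of_subseq_tendsto fun u hu => ?_
  obtain ⟨k, -, hk⟩ := (hfg.comp hu).exists_seq_tendsto_ae
  exact ⟨k, tendsto_integral_of_dominated_convergence bound (fun n => hf (u (k n))) hbound
    (fun n => hle (u (k n))) hk⟩

end DominatedConvergence

section SpectralDensity

variable {ι : Type*} {h k : ℝ × ℝ → ℝ}

/-- The covariance function of a stationary process with spectral density `h`, in real form. -/
def specCov (h : ℝ × ℝ → ℝ) (w : ℤ × ℤ) : ℝ :=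
  ∫ z in specBox, cos (w.1 * z.1 + w.2 * z.2) * h z

lemma integrable_cos_mul {ρ : Measure (ℝ × ℝ)} (hi : Integrable h ρ) (a b : ℝ) :
    Integrable (fun z => cos (a * z.1 + b * z.2) * h z) ρ :=
  Integrable.bdd_mul (c := 1) hi (by fun_prop) (ae_of_all _ fun _ => abs_cos_le_one _)

lemma specCov_zero (h : ℝ × ℝ → ℝ) : specCov h 0 = ∫ z in specBox, h z := by
  simp [specCov]

lemma specCov_neg (h : ℝ × ℝ → ℝ) (w : ℤ × ℤ) : specCov h (-w) = specCov h w := by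
  simp_rw [specCov, ← cos_neg (w.1 * _ + _)]
  simp [add_comm]

lemma specCov_add (hi : IntegrableOn h specBox) (ki : IntegrableOn k specBox) (w : ℤ × ℤ) :
    specCov (h + k) w = specCov h w + specCov k w := by
  simp_rw [specCov, Pi.add_apply, mul_add]
  exact integral_add (integrable_cos_mul hi _ _) (integrable_cos_mul ki _ _)

/-- The covariance matrix of a stationary process with spectral density `h`, sampled at the lattice
points `s i`. -/
def specCovMatrix (h : ℝ × ℝ → ℝ) (s : ι → ℤ × ℤ) : Matrix ι ι ℝ :=
  .of fun p q => specCov h (s q - s p)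

lemma specCovMatrix_add (hi : IntegrableOn h specBox) (ki : IntegrableOn k specBox)
    (s : ι → ℤ × ℤ) : specCovMatrix (h + k) s = specCovMatrix h s + specCovMatrix k s := by
  ext p q
  exact specCov_add hi ki _

lemma isHermitian_specCovMatrix (h : ℝ × ℝ → ℝ) (s : ι → ℤ × ℤ) :
    (specCovMatrix h s).IsHermitian := by
  ext p q
  simp [specCovMatrix, ← specCov_neg h (s p - s q)]

variable [Fintype ι]

lemma trace_specCovMatrix (h : ℝ × ℝ → ℝ) (s : ι → ℤ × ℤ) :
    (specCovMatrix h s).trace = Fintype.card ι * ∫ z in specBox, h z := by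
  simp [Matrix.trace, specCovMatrix, specCov_zero]

lemma sum_sum_mul_cos_sub (x θ : ι → ℝ) :
    ∑ p, ∑ q, x p * x q * cos (θ q - θ p) =
      (∑ p, x p * cos (θ p)) ^ 2 + (∑ p, x p * sin (θ p)) ^ 2 := by
  simp_rw [sq, Finset.sum_mul_sum, ← Finset.sum_add_distrib]
  refine Finset.sum_congr rfl fun p _ => Finset.sum_congr rfl fun q _ => ?_
  rw [cos_sub]
  ring

lemma dotProduct_specCovMatrix_mulVec (hi : IntegrableOn h specBox) (s : ι → ℤ × ℤ) (x : ι → ℝ) :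
    x ⬝ᵥ (specCovMatrix h s).mulVec x =
      ∫ z in specBox, ((∑ p, x p * cos ((s p).1 * z.1 + (s p).2 * z.2)) ^ 2 +
        (∑ p, x p * sin ((s p).1 * z.1 + (s p).2 * z.2)) ^ 2) * h z := by
  have integrable_term (p q : ι) := ((integrable_cos_mul hi ((s q - s p).1 : ℤ)
    ((s q - s p).2 : ℤ)).const_mul (x p * x q))
  calc x ⬝ᵥ (specCovMatrix h s).mulVec x
      = ∑ p, ∑ q, ∫ z in specBox,
          x p * x q * (cos ((s q - s p).1 * z.1 + (s q - s p).2 * z.2) * h z) := by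
        simp only [dotProduct, Matrix.mulVec, specCovMatrix, specCov, Matrix.of_apply,
          Finset.mul_sum, integral_const_mul]
        exact Finset.sum_congr rfl fun p _ => Finset.sum_congr rfl fun q _ => by ring
    _ = ∫ z in specBox, ∑ p, ∑ q,
          x p * x q * (cos ((s q - s p).1 * z.1 + (s q - s p).2 * z.2) * h z) := by
        rw [integral_finsetSum _ fun p _ => integrable_finsetSum _ fun q _ => integrable_term p q]
        exact Finset.sum_congr rfl fun p _ =>
          (integral_finsetSum _ fun q _ => integrable_term p q).symm
    _ = _ := by
        congr with z
        simp_rw [← sum_sum_mul_cos_sub, Finset.sum_mul]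
        refine Finset.sum_congr rfl fun p _ => Finset.sum_congr rfl fun q _ => ?_
        rw [← mul_assoc, Prod.fst_sub, Prod.snd_sub]
        push_cast
        ring_nf

lemma posSemidef_specCovMatrix {ι : Type*} [Finite ι] (hi : IntegrableOn h specBox) (h0 : 0 ≤ h)
    (s : ι → ℤ × ℤ) : (specCovMatrix h s).PosSemidef := by
  cases nonempty_fintype ι
  refine .of_dotProduct_mulVec_nonneg (isHermitian_specCovMatrix h s) fun x => ?_
  rw [star_trivial, dotProduct_specCovMatrix_mulVec hi]
  exact integral_nonneg fun z => mul_nonneg (by positivity) (h0 z)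

end SpectralDensity

section StationaryGaussian

variable {Ω : Type*} [MeasurableSpace Ω] {P : Measure Ω} {X : ℤ → ℤ → Ω → ℝ} {h : ℝ × ℝ → ℝ}

lemma HasSpecDensity.integral_mul_eq_specCov (hs : HasSpecDensity P X h)
    (hi : IntegrableOn h specBox) (w : ℤ × ℤ) :
    ∫ ω, X 0 0 ω * X w.1 w.2 ω ∂P = specCov h w := by
  have integrable : IntegrableOn (fun z : ℝ × ℝ =>
      Complex.exp (Complex.I * ((w.1 * z.1 + w.2 * z.2 : ℝ) : ℂ)) * (h z : ℂ)) specBox := by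
    refine Integrable.bdd_mul (c := 1) hi.ofReal (by fun_prop) (ae_of_all _ fun z => ?_)
    rw [mul_comm, Complex.norm_exp_ofReal_mul_I]
  have re_integral := Complex.reCLM.integral_comp_comm integrable
  rw [hs w.1 w.2] at re_integral
  simpa [specCov, mul_comm Complex.I, Complex.re_mul_ofReal, Complex.exp_ofReal_mul_I_re,
    -Complex.ofReal_add, -Complex.ofReal_mul] using re_integral.symm

namespace StatGauss

lemma integral_mul_eq_specCov (hX : StatGauss P X) (hs : HasSpecDensity P X h)
    (hi : IntegrableOn h specBox) (w w' : ℤ × ℤ) :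
    ∫ ω, X w.1 w.2 ω * X w'.1 w'.2 ω ∂P = specCov h (w' - w) := by
  rw [← hs.integral_mul_eq_specCov hi]
  simpa using hX.stat w.1 w.2 (w' - w).1 (w' - w).2

end StatGauss

variable {ι : Type*}

/-- The random vector obtained by sampling the field `X` at the lattice points `s i`. -/
def samples (X : ℤ → ℤ → Ω → ℝ) (s : ι → ℤ × ℤ) (ω : Ω) : EuclideanSpace ℝ ι :=
  WithLp.toLp 2 fun i => X (s i).1 (s i).2 ω

namespace StatGauss

lemma measurable_samples (hX : StatGauss P X) (s : ι → ℤ × ℤ) : Measurable (samples X s) :=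
  (WithLp.measurable_toLp 2 _).comp (measurable_pi_lambda _ fun i => hX.meas (s i).1 (s i).2)

variable [Fintype ι]

lemma exists_map_sum_eq_gaussianReal (hX : StatGauss P X) (s : ι → ℤ × ℤ) (t : ι → ℝ) :
    ∃ v, P.map (fun ω => ∑ i, t i * X (s i).1 (s i).2 ω) = gaussianReal 0 v := by
  obtain ⟨v, hv⟩ := hX.gauss ((Finsupp.equivFunOnFinite.symm t).mapDomain s)
  refine ⟨v, ?_⟩
  rw [← hv]
  congr with ω
  change _ = Finsupp.sum _ fun (q : ℤ × ℤ) (a : ℝ) => a * X q.1 q.2 ω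
  rw [Finsupp.sum_mapDomain_index (by simp) (by simp [add_mul]), Finsupp.sum_fintype _ _ (by simp)]
  rfl

lemma hasGaussianLaw_samples {ι : Type*} [Finite ι] (hX : StatGauss P X)
    (s : ι → ℤ × ℤ) : HasGaussianLaw (samples X s) P := by
  cases nonempty_fintype ι
  refine ⟨isGaussian_of_map_eq_gaussianReal fun L => ?_⟩
  obtain ⟨y, rfl⟩ := (InnerProductSpace.toDual ℝ (EuclideanSpace ℝ ι)).surjective L
  obtain ⟨v, hv⟩ := hX.exists_map_sum_eq_gaussianReal s y
  refine ⟨0, v, ?_⟩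
  rw [Measure.map_map (by fun_prop) (hX.measurable_samples s), ← hv]
  congr with ω
  simp [samples, PiLp.inner_apply, mul_comm]

lemma integral_eq_zero (hX : StatGauss P X) (w : ℤ × ℤ) : ∫ ω, X w.1 w.2 ω ∂P = 0 := by
  obtain ⟨v, hv⟩ := hX.exists_map_sum_eq_gaussianReal (fun _ : Unit => w) 1
  simp only [Fintype.sum_unique, Pi.one_apply, one_mul] at hv
  rw [← integral_map (f := fun x : ℝ => x) (hX.meas w.1 w.2).aemeasurable (by fun_prop), hv,
    integral_id_gaussianReal]

lemma map_samples_eq_multivariateGaussian [DecidableEq ι] (hX : StatGauss P X)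
    (hs : HasSpecDensity P X h) (hi : IntegrableOn h specBox) (h0 : 0 ≤ h) (s : ι → ℤ × ℤ) :
    P.map (samples X s) = multivariateGaussian 0 (specCovMatrix h s) := by
  have := (hX.hasGaussianLaw_samples s).isProbabilityMeasure
  have memLp (i : ι) : MemLp (X (s i).1 (s i).2) 2 P :=
    ((hX.hasGaussianLaw_samples s).map_fun (EuclideanSpace.proj (𝕜 := ℝ) i)).memLp_two
  refine map_toLp_eq_multivariateGaussian (hX.hasGaussianLaw_samples s)
    (fun i => hX.integral_eq_zero (s i)) (posSemidef_specCovMatrix hi h0 s) fun i j => ?_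
  rw [covariance_eq_sub (memLp i) (memLp j), hX.integral_eq_zero, zero_mul, sub_zero]
  exact hX.integral_mul_eq_specCov hs hi (s i) (s j)

end StatGauss

end StationaryGaussian

section LimitingSpectralDistribution

variable {h k : ℝ × ℝ → ℝ} {μ ν : Measure ℝ} {F : ℝ → ℝ} {K : ℝ≥0}

/-- The lattice points `(i, j)`, `1 ≤ i, j ≤ N`, shifted to the zero-based indices of `Fin N`. -/
def gridIndex (N : ℕ) (p : Fin N × Fin N) : ℤ × ℤ := (p.1 + 1, p.2 + 1)

lemma esdEval_scaledW {Ω : Type*} (X : ℤ → ℤ → Ω → ℝ) (F : ℝ → ℝ) (N : ℕ) (ω : Ω) :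
    esdEval (scaledW X N ω) F = esdStat F N (samples X (gridIndex N) ω) := rfl

/-- The expectation of `∫ F d(ESD(W_N/√N))` for a stationary Gaussian process with spectral
density `h`. -/
def gaussianEsdMean (h : ℝ × ℝ → ℝ) (F : ℝ → ℝ) (N : ℕ) : ℝ :=
  ∫ x, esdStat F N x ∂(multivariateGaussian 0 (specCovMatrix h (gridIndex N)))

lemma StatGauss.integral_esdEval_scaledW {Ω : Type*} [MeasurableSpace Ω] {P : Measure Ω}
    {X : ℤ → ℤ → Ω → ℝ} (hX : StatGauss P X)
    (hs : HasSpecDensity P X h) (hi : IntegrableOn h specBox) (h0 : 0 ≤ h)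
    (hF : LipschitzWith K F) (N : ℕ) :
    ∫ ω, esdEval (scaledW X N ω) F ∂P = gaussianEsdMean h F N := by
  rw [gaussianEsdMean, ← hX.map_samples_eq_multivariateGaussian hs hi h0,
    integral_map (hX.measurable_samples _).aemeasurable
      (lipschitzWith_esdStat hF N).continuous.aestronglyMeasurable]
  simp_rw [esdEval_scaledW]

lemma ESDTendstoInProb.tendsto_integral {Ω : Type*} [MeasurableSpace Ω] {P : Measure Ω}
    [IsFiniteMeasure P] {A : (N : ℕ) → Ω → Matrix (Fin N) (Fin N) ℝ} (hA : ESDTendstoInProb P A μ)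
    (hF : Continuous F) {C : ℝ} (hC : ∀ x, |F x| ≤ C)
    (hmeas : ∀ N, AEStronglyMeasurable (fun ω => esdEval (A N ω) F) P) :
    Tendsto (fun N => ∫ ω, esdEval (A N ω) F ∂P) atTop (nhds (∫ _, ∫ x, F x ∂μ ∂P)) := by
  have tendstoInMeasure :
      TendstoInMeasure P (fun N ω => esdEval (A N ω) F) atTop fun _ => ∫ x, F x ∂μ :=
    tendstoInMeasure_iff_dist.2 (hA F hF ⟨C, hC⟩)
  exact tendsto_integral_of_dominated_of_tendstoInMeasure hmeas (integrable_const C)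
    (fun N => ae_of_all _ fun ω => abs_esdEval_le hC (A N ω)) tendstoInMeasure

lemma IsLSDofDensity.tendsto_gaussianEsdMean (hμ : IsLSDofDensity h μ)
    (hi : IntegrableOn h specBox) (h0 : 0 ≤ h) (hF : LipschitzWith K F) {C : ℝ}
    (hC : ∀ x, |F x| ≤ C) :
    Tendsto (gaussianEsdMean h F) atTop (nhds (∫ t, F t ∂μ)) := by
  obtain ⟨Ω, _, P, _, X, hX, hs, hlim⟩ := hμ
  have measurable (N : ℕ) : AEStronglyMeasurable (fun ω => esdEval (scaledW X N ω) F) P := by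
    simp_rw [esdEval_scaledW]
    exact (lipschitzWith_esdStat hF N).continuous.comp_aestronglyMeasurable
      (hX.measurable_samples _).aestronglyMeasurable
  have tendsto_mean := hlim.tendsto_integral hF.continuous hC measurable
  simp_rw [hX.integral_esdEval_scaledW hs hi h0 hF] at tendsto_mean
  simpa using tendsto_mean

/-- The trace `N² ∫ k` of the added covariance is exactly offset by the Lipschitz constant `2K/N` of
`esdStat`, so the bound is uniform in `N`. -/
lemma dist_gaussianEsdMean_add_le (hi : IntegrableOn h specBox) (h0 : 0 ≤ h)
    (ki : IntegrableOn k specBox) (k0 : 0 ≤ k) (hF : LipschitzWith K F) (N : ℕ) :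
    dist (gaussianEsdMean (h + k) F N) (gaussianEsdMean h F N) ≤
      2 * K * √(∫ z in specBox, k z) := by
  calc dist (gaussianEsdMean (h + k) F N) (gaussianEsdMean h F N)
      ≤ (2 * K / N : ℝ≥0) * √(specCovMatrix k (gridIndex N)).trace := by
        rw [gaussianEsdMean, specCovMatrix_add hi ki]
        exact dist_integral_multivariateGaussian_add_le 0 (posSemidef_specCovMatrix hi h0 _)
          (posSemidef_specCovMatrix ki k0 _) (lipschitzWith_esdStat hF N)
    _ = N / N * (2 * K * √(∫ z in specBox, k z)) := by
        rw [trace_specCovMatrix, Fintype.card_prod, Fintype.card_fin, Nat.cast_mul,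
          Real.sqrt_mul (by positivity), Real.sqrt_mul_self N.cast_nonneg]
        push_cast
        ring
    _ ≤ 2 * K * √(∫ z in specBox, k z) := mul_le_of_le_one_left (by positivity) (div_self_le_one _)

lemma dist_gaussianEsdMean_inf_left_le (hi : IntegrableOn h specBox) (h0 : 0 ≤ h)
    (ki : IntegrableOn k specBox) (k0 : 0 ≤ k) (hF : LipschitzWith K F) (N : ℕ) :
    dist (gaussianEsdMean h F N) (gaussianEsdMean (h ⊓ k) F N) ≤
      2 * K * √(∫ z in specBox, |h z - k z|) := by
  have excess_le (z : ℝ × ℝ) : (h - h ⊓ k) z ≤ |h z - k z| := by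
    rw [Pi.sub_apply, Pi.inf_apply, ← max_sub_sub_left, sub_self]
    exact max_le (abs_nonneg _) (le_abs_self _)
  calc dist (gaussianEsdMean h F N) (gaussianEsdMean (h ⊓ k) F N)
      ≤ 2 * K * √(∫ z in specBox, (h - h ⊓ k) z) := by
        simpa using dist_gaussianEsdMean_add_le (hi.inf ki) (le_inf h0 k0) (hi.sub (hi.inf ki))
          (sub_nonneg.2 inf_le_left) hF N
    _ ≤ 2 * K * √(∫ z in specBox, |h z - k z|) := by
        gcongr 2 * K * √?_
        exact integral_mono (hi.sub (hi.inf ki)) (hi.sub ki).abs excess_le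

lemma dist_gaussianEsdMean_le (hi : IntegrableOn h specBox) (h0 : 0 ≤ h)
    (ki : IntegrableOn k specBox) (k0 : 0 ≤ k) (hF : LipschitzWith K F) (N : ℕ) :
    dist (gaussianEsdMean h F N) (gaussianEsdMean k F N) ≤
      4 * K * √(∫ z in specBox, |h z - k z|) := by
  have left := dist_gaussianEsdMean_inf_left_le hi h0 ki k0 hF N
  have right := dist_gaussianEsdMean_inf_left_le ki k0 hi h0 hF N
  simp_rw [inf_comm k h, abs_sub_comm (k _)] at right
  linarith [dist_triangle_right (gaussianEsdMean h F N) (gaussianEsdMean k F N)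
    (gaussianEsdMean (h ⊓ k) F N)]

lemma IsLSDofDensity.dist_integral_le (hμ : IsLSDofDensity h μ) (hν : IsLSDofDensity k ν)
    (hi : IntegrableOn h specBox) (h0 : 0 ≤ h) (ki : IntegrableOn k specBox) (k0 : 0 ≤ k)
    (hF : LipschitzWith K F) {C : ℝ} (hC : ∀ x, |F x| ≤ C) :
    dist (∫ t, F t ∂μ) (∫ t, F t ∂ν) ≤ 4 * K * √(∫ z in specBox, |h z - k z|) :=
  le_of_tendsto' ((hμ.tendsto_gaussianEsdMean hi h0 hF hC).dist
    (hν.tendsto_gaussianEsdMean ki k0 hF hC)) (dist_gaussianEsdMean_le hi h0 ki k0 hF)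

end LimitingSpectralDistribution

section WeakConvergence

lemma tendsto_probabilityMeasure_of_dist_integral_lipschitz_le {E ι : Type*}
    [PseudoEMetricSpace E] [MeasurableSpace E] [OpensMeasurableSpace E] {l : Filter ι}
    [l.IsCountablyGenerated] {M : ι → ProbabilityMeasure E} {M' : ProbabilityMeasure E} {δ : ι → ℝ}
    (hδ : Tendsto δ l (nhds 0))
    (hM : ∀ (F : E → ℝ) (K : ℝ≥0) (C : ℝ), LipschitzWith K F → (∀ x, |F x| ≤ C) →
      ∀ i, dist (∫ x, F x ∂(M i)) (∫ x, F x ∂M') ≤ K * δ i) :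
    Tendsto M l (nhds M') := by
  rw [tendsto_iff_forall_lipschitz_integral_tendsto]
  rintro F ⟨C, hC⟩ ⟨K, hF⟩
  obtain ⟨x₀⟩ := M'.nonempty
  have bound (x : E) : |F x| ≤ |F x₀| + C := by
    linarith [abs_sub_abs_le_abs_sub (F x) (F x₀), hC x x₀, Real.dist_eq (F x) (F x₀)]
  rw [tendsto_iff_dist_tendsto_zero]
  exact squeeze_zero (fun _ => dist_nonneg) (hM F K _ hF bound)
    (by simpa using hδ.const_mul (K : ℝ))

end WeakConvergence

/-- **Lemma 3.5.** If nonnegative, integrable, even densities `g_n` converge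
to `g_∞` in `L¹([-π,π]²)`, then `μ_{g_n}` converges weakly to `μ_{g_∞}`. -/
theorem statement11 (g : ℕ → ℝ × ℝ → ℝ) (ginf : ℝ × ℝ → ℝ)
    (hg_nonneg : ∀ n q, 0 ≤ g n q) (hginf_nonneg : ∀ q, 0 ≤ ginf q)
    (hg_int : ∀ n, IntegrableOn (g n) specBox volume)
    (hginf_int : IntegrableOn ginf specBox volume)
    (hg_even : ∀ n, ∀ᵐ q ∂(volume.restrict specBox), g n (-q.1, -q.2) = g n q)
    (hginf_even : ∀ᵐ q ∂(volume.restrict specBox), ginf (-q.1, -q.2) = ginf q)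
    (hL1 : Tendsto (fun n => ∫ q in specBox, |g n q - ginf q|) atTop (nhds 0))
    (μ : ℕ → Measure ℝ) (μinf : Measure ℝ)
    (hμ : ∀ n, IsProbabilityMeasure (μ n)) (hμinf : IsProbabilityMeasure μinf)
    (hlsd : ∀ n, IsLSDofDensity (g n) (μ n))
    (hlsdinf : IsLSDofDensity ginf μinf) :
    ∀ F : ℝ → ℝ, Continuous F → (∃ C, ∀ t, |F t| ≤ C) →
      Tendsto (fun n => ∫ t, F t ∂(μ n)) atTop (nhds (∫ t, F t ∂μinf)) := by
  rintro F hF ⟨C, hC⟩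
  let M (n : ℕ) : ProbabilityMeasure ℝ := ⟨μ n, hμ n⟩
  let Minf : ProbabilityMeasure ℝ := ⟨μinf, hμinf⟩
  have tendsto_bound :
      Tendsto (fun n => 4 * √(∫ q in specBox, |g n q - ginf q|)) atTop (nhds 0) := by
    simpa using hL1.sqrt.const_mul 4
  have weak_limit : Tendsto M atTop (nhds Minf) := by
    refine tendsto_probabilityMeasure_of_dist_integral_lipschitz_le tendsto_bound
      fun G K C hG hC n => ?_
    rw [mul_left_comm, ← mul_assoc]
    exact (hlsd n).dist_integral_le hlsdinf (hg_int n) (hg_nonneg n) hginf_int hginf_nonneg hG hC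
  exact ProbabilityMeasure.tendsto_iff_forall_integral_tendsto.1 weak_limit
    (.ofNormedAddCommGroup F hF C hC)

end
end
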